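/- arXiv:1710.01563 — 3 statements merged into one kernel-verified Lean document; each statement's English description precedes it below -/
import Mathlib

section
/- Let q be an odd prime power with q ≥ 5 and let F be a finite field with q elements. Then PSL₂(F) has a maximal subgroup H of odd index with H isomorphic to the dihedral group of order q+1 (DihedralGroup ((q+1)/2) in Mathlib's convention, where DihedralGroup m has order 2m) if and only if q > 7 and q ≡ 3 (mod 4). -/
/-- If a fixed point is the only point whose orbit length is not divisible by `k`,
then the number of points is `1` modulo `k`. -/
theorem MulAction.card_modEq_one_of_dvd_card_orbit {C X : Type*} [Group C] [MulAction C X]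
    [Finite X] {k : ℕ} (x₀ : X) (hfix : MulAction.orbit C x₀ = {x₀})
    (horb : ∀ x, x ≠ x₀ → k ∣ Nat.card (MulAction.orbit C x)) :
    Nat.card X ≡ 1 [MOD k] := by
  classical
  have := Fintype.ofFinite X
  have := Fintype.ofFinite (MulAction.orbitRel.Quotient C X)
  rw [Nat.card_congr (MulAction.selfEquivSigmaOrbits' C X), Nat.card_sigma,
    ← Finset.add_sum_erase _ _ (Finset.mem_univ (Quotient.mk'' x₀))]
  have h₀ : Nat.card (MulAction.orbitRel.Quotient.orbit
      (Quotient.mk'' x₀ : MulAction.orbitRel.Quotient C X)) = 1 := by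
    rw [MulAction.orbitRel.Quotient.orbit_mk, hfix]
    simp
  rw [h₀]
  refine (Nat.modEq_iff_dvd' (Nat.le_add_right 1 _)).2 ?_ |>.symm
  rw [Nat.add_sub_cancel_left]
  refine Finset.dvd_sum fun ω hω ↦ ?_
  induction ω using Quotient.inductionOn' with
  | _ x =>
    rw [MulAction.orbitRel.Quotient.orbit_mk]
    exact horb x fun h ↦ Finset.ne_of_mem_erase hω (by rw [h])

/-- A counting congruence for a cyclic subgroup `C ≤ H` of order `2 * k` that meets every
other conjugate of `H` in elements of order at most two. -/
theorem Subgroup.index_modEq_one {G : Type*} [Group G] [Finite G] {H C : Subgroup G}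
    [IsCyclic C] {k : ℕ} (hCH : C ≤ H) (hC : Nat.card C = 2 * k)
    (hinter : ∀ y ∉ H, ∀ x ∈ C, y⁻¹ * x * y ∈ H → x ^ 2 = 1) :
    H.index ≡ 1 [MOD k] := by
  classical
  refine MulAction.card_modEq_one_of_dvd_card_orbit (C := C) ((1 : G) : G ⧸ H) ?_ ?_
  · ext z
    simp only [MulAction.mem_orbit_iff, Set.mem_singleton_iff]
    constructor
    · rintro ⟨c, rfl⟩
      exact (QuotientGroup.eq (s := H)).2 (by simpa using hCH c.2)
    · rintro rfl
      exact ⟨1, one_smul _ _⟩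
  · intro x hx
    induction x using QuotientGroup.induction_on with
    | _ y =>
    have hy : y ∉ H := fun h ↦ hx ((QuotientGroup.eq (s := H)).2 (by simpa using h))
    have hst : ∀ c ∈ MulAction.stabilizer C (y : G ⧸ H), c ^ 2 = 1 := by
      intro c hc
      have h := (QuotientGroup.eq (s := H)).1 (MulAction.mem_stabilizer_iff.1 hc).symm
      refine Subtype.ext (hinter y hy c c.2 ?_)
      simpa [Subgroup.smul_def, mul_assoc] using h
    have hle : Nat.card (MulAction.stabilizer C (y : G ⧸ H)) ≤ 2 := by
      have := Fintype.ofFinite C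
      refine le_trans ?_ (IsCyclic.card_pow_eq_one_le (α := C) (n := 2) two_pos)
      rw [← Set.ncard_coe_finset]
      exact Set.ncard_le_ncard (s := (MulAction.stabilizer C (y : G ⧸ H) : Set C))
        (fun c hc ↦ by simpa using hst c hc) (Set.toFinite _)
    have hmul := (MulAction.stabilizer C (y : G ⧸ H)).card_mul_index
    rw [MulAction.index_stabilizer, hC, ← Nat.card_coe_set_eq] at hmul
    have hpos : 0 < Nat.card (MulAction.stabilizer C (y : G ⧸ H)) := Nat.card_pos
    interval_cases Nat.card (MulAction.stabilizer C (y : G ⧸ H))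
    · exact ⟨2, by linarith⟩
    · exact ⟨1, by linarith⟩

theorem Subgroup.relIndex_modEq_one {G : Type*} [Group G] [Finite G] {H C M : Subgroup G}
    [IsCyclic C] {k : ℕ} (hCH : C ≤ H) (hHM : H ≤ M) (hC : Nat.card C = 2 * k)
    (hinter : ∀ y ∉ H, ∀ x ∈ C, y⁻¹ * x * y ∈ H → x ^ 2 = 1) :
    H.relIndex M ≡ 1 [MOD k] := by
  let e := Subgroup.subgroupOfEquivOfLe (hCH.trans hHM)
  have : IsCyclic (C.subgroupOf M) := isCyclic_of_injective e.toMonoidHom e.injective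
  refine Subgroup.index_modEq_one (C := C.subgroupOf M)
    (fun x hx ↦ hCH hx) (by rw [Nat.card_congr e.toEquiv, hC]) ?_
  intro y hy x hx h
  exact Subtype.ext (hinter y hy x hx h)

/-- The only factorizations of `(4 * k - 1) * (2 * k - 1)` into two nontrivial factors congruent
to `1` modulo `k` occur for `k = 2, 4, 14`. -/
theorem eq_one_or_eq_one_of_mul_eq {k n m : ℕ} (hk : 3 ≤ k) (hk4 : k ≠ 4) (hk14 : k ≠ 14)
    (hnm : n * m = (4 * k - 1) * (2 * k - 1)) (hn : n ≡ 1 [MOD k]) : n = 1 ∨ m = 1 := by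
  have hprod : n * m + 6 * k = 8 * (k * k) + 1 := by
    rw [hnm]
    obtain ⟨j, rfl⟩ : ∃ j, k = j + 1 := ⟨k - 1, by omega⟩
    rw [show 4 * (j + 1) - 1 = 4 * j + 3 by omega, show 2 * (j + 1) - 1 = 2 * j + 1 by omega]
    ring
  have hm : m ≡ 1 [MOD k] := by
    have h1 : n * m ≡ 1 * m [MOD k] := hn.mul_right m
    have h2 : n * m + 6 * k ≡ 1 [MOD k] := by
      rw [hprod, Nat.ModEq, show 8 * (k * k) + 1 = 1 + k * (8 * k) by ring,
        Nat.add_mul_mod_self_left]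
    have h3 : n * m + 6 * k ≡ n * m [MOD k] := by
      rw [Nat.ModEq, Nat.add_mul_mod_self_right]
    simpa using (h1.symm.trans h3.symm).trans h2
  have hn0 : 1 ≤ n := Nat.pos_of_ne_zero fun h ↦ by
    rw [h, zero_mul] at hprod; nlinarith
  have hm0 : 1 ≤ m := Nat.pos_of_ne_zero fun h ↦ by
    rw [h, mul_zero] at hprod; nlinarith
  obtain ⟨a, ha⟩ := (Nat.modEq_iff_dvd' hn0).1 hn.symm
  obtain ⟨b, hb⟩ := (Nat.modEq_iff_dvd' hm0).1 hm.symm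
  obtain rfl : n = 1 + k * a := by omega
  obtain rfl : m = 1 + k * b := by omega
  by_contra! h
  have ha0 : 1 ≤ a := Nat.pos_of_ne_zero fun h0 ↦ h.1 (by simp [h0])
  have hb0 : 1 ≤ b := Nat.pos_of_ne_zero fun h0 ↦ h.2 (by simp [h0])
  have key : a + b + k * (a * b) + 6 = 8 * k := by
    refine Nat.eq_of_mul_eq_mul_left (show 0 < k by omega) ?_
    linarith
  have hab : a * b < 8 := by nlinarith
  have ha8 : a < 8 := by nlinarith
  have hb8 : b < 8 := by nlinarith
  interval_cases a <;> interval_cases b <;> omega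

/-- Recognition of a finite dihedral group by a rotation and a reflection. -/
theorem nonempty_mulEquiv_dihedralGroup {G : Type*} [Group G] [Finite G] {n : ℕ} (hn : n ≠ 0)
    {c s : G} (hc : orderOf c = n) (hs : s ∉ Subgroup.zpowers c) (hss : s * s = 1)
    (hsc : s * c * s⁻¹ = c⁻¹) (hG : Nat.card G = 2 * n) :
    Nonempty (G ≃* DihedralGroup n) := by
  have : NeZero n := ⟨hn⟩
  let f : ZMod n →+ Additive G := ZMod.lift n ⟨zmultiplesHom _ (Additive.ofMul c), by
    change (n : ℤ) • Additive.ofMul c = 0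
    rw [← hc, natCast_zsmul, ← ofMul_pow, pow_orderOf_eq_one, ofMul_one]⟩
  let g : ZMod n → G := fun i ↦ (f i).toMul
  have hgint (i : ℤ) : g i = c ^ i := by
    simp [g, f]
  have hg (i : ZMod n) : ∃ j : ℤ, (j : ZMod n) = i ∧ g i = c ^ j := by
    obtain ⟨j, rfl⟩ := ZMod.intCast_surjective i
    exact ⟨j, rfl, hgint j⟩
  have hadd (i j : ZMod n) : g (i + j) = g i * g j := by simp [g]
  have hneg (i : ZMod n) : g (-i) = (g i)⁻¹ := by simp [g]
  have hinj : Function.Injective g := by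
    intro i j hij
    obtain ⟨a, rfl, ha⟩ := hg i
    obtain ⟨b, rfl, hb⟩ := hg j
    rw [ha, hb, zpow_eq_zpow_iff_modEq, hc] at hij
    exact (ZMod.intCast_eq_intCast_iff a b n).2 hij
  have hconj (i : ZMod n) : g i * s = s * g (-i) := by
    obtain ⟨a, rfl, ha⟩ := hg i
    have h : s * c ^ a * s⁻¹ = (c ^ a)⁻¹ := by
      rw [← conj_zpow, hsc, inv_zpow]
    rw [hneg, ha, ← h, inv_eq_of_mul_eq_one_left hss]
    simp only [← mul_assoc, hss, one_mul]
  have hmem (i : ZMod n) : g i ∈ Subgroup.zpowers c := by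
    obtain ⟨a, -, ha⟩ := hg i
    exact ⟨a, ha.symm⟩
  let φ : DihedralGroup n →* G :=
    { toFun := fun x ↦ match x with
        | .r i => g i
        | .sr i => s * g i
      map_one' := by
        change g 0 = 1
        simp [g]
      map_mul' := by
        rintro (i | i) (j | j)
        · exact hadd i j
        · change s * g (j - i) = g i * (s * g j)
          rw [← mul_assoc, hconj, mul_assoc, ← hadd, neg_add_eq_sub]
        · change s * g (i + j) = s * g i * g j
          rw [hadd, mul_assoc]
        · change g (j - i) = s * g i * (s * g j)
          rw [mul_assoc, ← mul_assoc (g i), hconj, mul_assoc, ← hadd, ← mul_assoc, hss, one_mul,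
            neg_add_eq_sub] }
  have hφ : Function.Injective φ := by
    have hne (i j : ZMod n) : g i ≠ s * g j := fun h ↦
      hs ((Subgroup.mul_mem_cancel_right _ (hmem j)).1 (h ▸ hmem i))
    rintro (i | i) (j | j) h
    · exact congrArg _ (hinj h)
    · exact absurd h (hne i j)
    · exact absurd h.symm (hne j i)
    · exact congrArg _ (hinj (mul_left_cancel h))
  have hbij : Function.Bijective φ :=
    (Nat.bijective_iff_injective_and_card φ).2 ⟨hφ, by rw [DihedralGroup.nat_card, hG]⟩
  exact ⟨(MulEquiv.ofBijective φ hbij).symm⟩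

open scoped MatrixGroups

namespace PSL2

variable {F : Type*} [Field F]

open Matrix

theorem sl2_ext {g h : SL(2, F)} (h00 : g 0 0 = h 0 0) (h01 : g 0 1 = h 0 1)
    (h10 : g 1 0 = h 1 0) (h11 : g 1 1 = h 1 1) : g = h := by
  ext i j
  fin_cases i <;> fin_cases j <;> assumption

theorem det_eq_one (g : SL(2, F)) : g 0 0 * g 1 1 - g 0 1 * g 1 0 = 1 := by
  rw [← Matrix.det_fin_two, g.det_coe]

theorem mul_apply_fin_two (g h : SL(2, F)) (i j : Fin 2) :
    (g * h) i j = g i 0 * h 0 j + g i 1 * h 1 j := by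
  simp only [Matrix.SpecialLinearGroup.coe_mul, Matrix.mul_apply, Fin.sum_univ_two]

theorem mem_center_iff (g : SL(2, F)) : g ∈ Subgroup.center SL(2, F) ↔ g = 1 ∨ g = -1 := by
  rw [Matrix.SpecialLinearGroup.mem_center_iff]
  constructor
  · rintro ⟨r, hr, hg⟩
    rw [Fintype.card_fin, sq_eq_one_iff] at hr
    rcases hr with rfl | rfl
    · exact .inl (Subtype.ext (by simpa using hg.symm))
    · exact .inr (Subtype.ext (by rw [← hg, map_neg, map_one]; rfl))
  · rintro (rfl | rfl)
    · exact ⟨1, by simp, by simp⟩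
    · exact ⟨-1, by simp, by rw [map_neg, map_one]; rfl⟩

theorem mk_eq_mk_iff (g h : SL(2, F)) : (g : PSL(2, F)) = h ↔ g = h ∨ g = -h := by
  rw [eq_comm, QuotientGroup.eq, mem_center_iff, inv_mul_eq_one, inv_mul_eq_iff_eq_mul]
  simp [eq_comm]

theorem card_sl2 [Fintype F] :
    Nat.card SL(2, F) * (Fintype.card F - 1) =
      (Fintype.card F ^ 2 - 1) * (Fintype.card F ^ 2 - Fintype.card F) := by
  have hrange : (SpecialLinearGroup.toGL : SL(2, F) →* GL (Fin 2) F).range =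
      (GeneralLinearGroup.det : GL (Fin 2) F →* Fˣ).ker := by
    ext g
    constructor
    · rintro ⟨h, rfl⟩
      exact Units.ext h.det_coe
    · intro hg
      exact ⟨⟨g, congrArg Units.val (MonoidHom.mem_ker.1 hg)⟩, Units.ext rfl⟩
  have hdet : Function.Surjective (GeneralLinearGroup.det : GL (Fin 2) F →* Fˣ) := by
    intro u
    refine ⟨GeneralLinearGroup.mkOfDetNeZero !![(u : F), 0; 0, 1] (by simp), Units.ext ?_⟩
    simp [GeneralLinearGroup.mkOfDetNeZero]
  have h := (GeneralLinearGroup.det : GL (Fin 2) F →* Fˣ).ker.card_mul_index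
  rw [Subgroup.index_ker, MonoidHom.range_eq_top.2 hdet, ← hrange, Matrix.card_GL_field,
    Fin.prod_univ_two,
    ← Nat.card_congr (MonoidHom.ofInjective SpecialLinearGroup.toGL_injective).toEquiv,
    Subgroup.card_top, Nat.card_units, Nat.card_eq_fintype_card (α := F)] at h
  simpa using h

theorem neg_one_ne_one (h2 : (2 : F) ≠ 0) : (-1 : SL(2, F)) ≠ 1 := fun h ↦ h2 (by
  have : (-1 : F) = 1 := by simpa using congrArg (fun g : SL(2, F) ↦ g 0 0) h
  linear_combination -this)

theorem card_center (h2 : (2 : F) ≠ 0) : Nat.card (Subgroup.center SL(2, F)) = 2 := by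
  have : ((Subgroup.center SL(2, F) : Subgroup SL(2, F)) : Set SL(2, F)) = {1, -1} := by
    ext g
    simpa using mem_center_iff g
  rw [← SetLike.coe_sort_coe, this, Nat.card_coe_set_eq, Set.ncard_pair (neg_one_ne_one h2).symm]

theorem card_psl2 [Fintype F] (h2 : (2 : F) ≠ 0) :
    Nat.card PSL(2, F) * 2 = Fintype.card F * (Fintype.card F + 1) * (Fintype.card F - 1) := by
  have h := Subgroup.card_eq_card_quotient_mul_card_subgroup (Subgroup.center SL(2, F))
  have h1 := card_sl2 (F := F)
  obtain ⟨q, hq⟩ : ∃ q, Fintype.card F = q + 2 :=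
    ⟨Fintype.card F - 2, by have := Fintype.one_lt_card (α := F); omega⟩
  rw [card_center h2] at h
  rw [← h]
  rw [hq] at h1 ⊢
  rw [show (q + 2) ^ 2 - 1 = (q + 3) * (q + 1) by
      rw [show (q + 2) ^ 2 = (q + 3) * (q + 1) + 1 by ring, Nat.add_sub_cancel],
    show (q + 2) ^ 2 - (q + 2) = (q + 2) * (q + 1) by
      rw [show (q + 2) ^ 2 = (q + 2) * (q + 1) + (q + 2) by ring, Nat.add_sub_cancel],
    show q + 2 - 1 = q + 1 by omega] at *
  refine Nat.eq_of_mul_eq_mul_right (Nat.succ_pos q) ?_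
  rw [Nat.succ_eq_add_one, h1]
  ring

variable (F) in
/-- The rotation by a right angle. -/
def quarterTurn : SL(2, F) := ⟨!![0, -1; 1, 0], by simp⟩

@[simp] theorem quarterTurn_zero_zero : quarterTurn F 0 0 = 0 := rfl

@[simp] theorem quarterTurn_zero_one : quarterTurn F 0 1 = -1 := rfl

@[simp] theorem quarterTurn_one_zero : quarterTurn F 1 0 = 1 := rfl

@[simp] theorem quarterTurn_one_one : quarterTurn F 1 1 = 0 := rfl

theorem commute_quarterTurn_iff (g : SL(2, F)) :
    g * quarterTurn F = quarterTurn F * g ↔ g 1 1 = g 0 0 ∧ g 1 0 = -g 0 1 := by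
  constructor
  · intro h
    have h0 := congrArg (fun g : SL(2, F) ↦ g 0 0) h
    have h1 := congrArg (fun g : SL(2, F) ↦ g 0 1) h
    simp only [mul_apply_fin_two] at h0 h1
    simp at h0 h1
    grind
  · rintro ⟨h0, h1⟩
    apply sl2_ext <;> simp [mul_apply_fin_two, h0, h1]

theorem anticommute_quarterTurn_iff (g : SL(2, F)) :
    g * quarterTurn F = -(quarterTurn F * g) ↔ g 1 1 = -g 0 0 ∧ g 1 0 = g 0 1 := by
  constructor
  · intro h
    have h0 := congrArg (fun g : SL(2, F) ↦ g 0 0) h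
    have h1 := congrArg (fun g : SL(2, F) ↦ g 0 1) h
    simp only [mul_apply_fin_two, SpecialLinearGroup.coe_neg, Matrix.neg_apply] at h0 h1
    simp at h0 h1
    grind
  · rintro ⟨h0, h1⟩
    apply sl2_ext <;> simp [Matrix.mul_apply, h0, h1]

variable (F) in
/-- The group of rotations of the form `x ^ 2 + y ^ 2`. -/
def rotationSL : Subgroup SL(2, F) := Subgroup.centralizer {quarterTurn F}

variable (F) in
/-- The image in `PSL(2, F)` of the group of rotations. -/
def rotation : Subgroup PSL(2, F) := (rotationSL F).map (QuotientGroup.mk' _)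

variable (F) in
/-- The centralizer in `PSL(2, F)` of the rotation by a right angle. -/
def involutionCentralizer : Subgroup PSL(2, F) :=
  Subgroup.centralizer {(quarterTurn F : PSL(2, F))}

theorem mem_rotationSL_iff (g : SL(2, F)) :
    g ∈ rotationSL F ↔ g 1 1 = g 0 0 ∧ g 1 0 = -g 0 1 := by
  rw [rotationSL, Subgroup.mem_centralizer_singleton_iff, ← commute_quarterTurn_iff]

theorem mk_mem_rotation_iff (g : SL(2, F)) :
    (g : PSL(2, F)) ∈ rotation F ↔ g 1 1 = g 0 0 ∧ g 1 0 = -g 0 1 := by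
  rw [← mem_rotationSL_iff]
  constructor
  · rintro ⟨h, hh, he⟩
    rcases (mk_eq_mk_iff h g).1 he with rfl | rfl
    · exact hh
    · simpa [mem_rotationSL_iff, neg_eq_iff_eq_neg] using hh
  · exact fun h ↦ ⟨g, h, rfl⟩

theorem mk_mem_involutionCentralizer_iff (g : SL(2, F)) :
    (g : PSL(2, F)) ∈ involutionCentralizer F ↔
      (g 1 1 = g 0 0 ∧ g 1 0 = -g 0 1) ∨ (g 1 1 = -g 0 0 ∧ g 1 0 = g 0 1) := by
  rw [involutionCentralizer, Subgroup.mem_centralizer_singleton_iff, ← commute_quarterTurn_iff,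
    ← anticommute_quarterTurn_iff, ← mk_eq_mk_iff]
  rfl

theorem rotation_le_involutionCentralizer : rotation F ≤ involutionCentralizer F := by
  intro x hx
  induction x using QuotientGroup.induction_on with
  | _ g => exact (mk_mem_involutionCentralizer_iff g).2 (.inl ((mk_mem_rotation_iff g).1 hx))

/-- Elements of the centralizer other than rotations are reflections. -/
theorem anticommute_of_not_mem_rotation {g : SL(2, F)}
    (hg : (g : PSL(2, F)) ∈ involutionCentralizer F) (hg' : (g : PSL(2, F)) ∉ rotation F) :
    g 1 1 = -g 0 0 ∧ g 1 0 = g 0 1 :=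
  ((mk_mem_involutionCentralizer_iff g).1 hg).resolve_left fun h ↦
    hg' ((mk_mem_rotation_iff g).2 h)

theorem mul_self_eq_one_of_not_mem_rotation {x : PSL(2, F)} (hx : x ∈ involutionCentralizer F)
    (hx' : x ∉ rotation F) : x * x = 1 := by
  induction x using QuotientGroup.induction_on with
  | _ g =>
    obtain ⟨h1, h2⟩ := anticommute_of_not_mem_rotation hx hx'
    have hd := det_eq_one g
    refine (mk_eq_mk_iff (g * g) 1).2 (.inr ?_)
    apply sl2_ext <;> simp [mul_apply_fin_two, h1, h2] <;> grind

theorem conj_eq_inv_of_not_mem_rotation {x y : PSL(2, F)} (hx : x ∈ involutionCentralizer F)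
    (hx' : x ∉ rotation F) (hy : y ∈ rotation F) : x * y * x⁻¹ = y⁻¹ := by
  rw [mul_inv_eq_iff_eq_mul, eq_inv_mul_iff_mul_eq]
  induction x using QuotientGroup.induction_on with
  | _ g =>
  induction y using QuotientGroup.induction_on with
  | _ h =>
    obtain ⟨h1, h2⟩ := anticommute_of_not_mem_rotation hx hx'
    obtain ⟨h3, h4⟩ := (mk_mem_rotation_iff h).1 hy
    have hd := det_eq_one h
    refine (mk_eq_mk_iff (h * (g * h)) g).2 (.inl ?_)
    apply sl2_ext <;> simp [mul_apply_fin_two, h1, h2, h3, h4] <;> grind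

/-- A rotation of order greater than two is conjugated to a rotation only by elements
of the centralizer. -/
theorem mem_involutionCentralizer_of_conj_mem (h2 : (2 : F) ≠ 0) {x y : PSL(2, F)}
    (hx : x ∈ rotation F) (hx2 : x ^ 2 ≠ 1) (hxy : y⁻¹ * x * y ∈ rotation F) :
    y ∈ involutionCentralizer F := by
  induction x using QuotientGroup.induction_on with
  | _ g =>
  induction y using QuotientGroup.induction_on with
  | _ h =>
    obtain ⟨hg1, hg0⟩ := (mk_mem_rotation_iff g).1 hx
    have hg : g 0 1 ≠ 0 := by
      intro h0
      have hd := det_eq_one g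
      refine hx2 ((mk_eq_mk_iff (g ^ 2) 1).2 (.inl ?_))
      rw [sq]
      apply sl2_ext <;> simp [mul_apply_fin_two, hg1, hg0, h0] <;> grind
    have hJ : h * quarterTurn F * h⁻¹ ∈ rotationSL F := by
      have hc := (mem_rotationSL_iff _).2 ((mk_mem_rotation_iff (h⁻¹ * g * h)).1 hxy)
      rw [rotationSL, Subgroup.mem_centralizer_singleton_iff] at hc
      have hcomm : (h * quarterTurn F * h⁻¹) * g = g * (h * quarterTurn F * h⁻¹) := by
        calc (h * quarterTurn F * h⁻¹) * g
            = h * (quarterTurn F * (h⁻¹ * g * h)) * h⁻¹ := by group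
          _ = h * ((h⁻¹ * g * h) * quarterTurn F) * h⁻¹ := by rw [hc]
          _ = g * (h * quarterTurn F * h⁻¹) := by group
      generalize h * quarterTurn F * h⁻¹ = u at hcomm
      have e0 := congrArg (fun g : SL(2, F) ↦ g 0 0) hcomm
      have e1 := congrArg (fun g : SL(2, F) ↦ g 0 1) hcomm
      simp only [mul_apply_fin_two, hg1, hg0] at e0 e1
      rw [mem_rotationSL_iff]
      constructor
      · apply mul_left_cancel₀ hg
        linear_combination -e1
      · apply mul_left_cancel₀ hg
        linear_combination -e0
    have hsq : (h * quarterTurn F * h⁻¹) * (h * quarterTurn F * h⁻¹) = -1 := by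
      have hJJ : quarterTurn F * quarterTurn F = -1 := by
        apply sl2_ext <;> simp [mul_apply_fin_two]
      calc (h * quarterTurn F * h⁻¹) * (h * quarterTurn F * h⁻¹)
          = h * (quarterTurn F * quarterTurn F) * h⁻¹ := by group
        _ = -1 := by rw [hJJ]; simp
    suffices h * quarterTurn F * h⁻¹ = quarterTurn F ∨ h * quarterTurn F * h⁻¹ = -quarterTurn F by
      rw [mul_inv_eq_iff_eq_mul, mul_inv_eq_iff_eq_mul, neg_mul, ← mk_eq_mk_iff] at this
      exact Subgroup.mem_centralizer_singleton_iff.2 this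
    generalize h * quarterTurn F * h⁻¹ = u at hJ hsq
    obtain ⟨hu1, hu0⟩ := (mem_rotationSL_iff u).1 hJ
    have hd := det_eq_one u
    have e0 := congrArg (fun g : SL(2, F) ↦ g 0 0) hsq
    simp [mul_apply_fin_two] at e0
    rw [hu1, hu0] at hd
    rw [hu0] at e0
    have ha : u 0 0 = 0 := by
      have : 2 * u 0 0 ^ 2 = 0 := by linear_combination hd + e0
      simpa [h2] using this
    have hb : u 0 1 ^ 2 = 1 := by rw [ha] at hd; linear_combination hd
    rcases sq_eq_one_iff.1 hb with hb | hb
    · right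
      apply sl2_ext <;> simp [hu1, hu0, ha, hb]
    · left
      apply sl2_ext <;> simp [hu1, hu0, ha, hb]

theorem mul_mem_rotation {x y : PSL(2, F)} (hx : x ∈ involutionCentralizer F)
    (hx' : x ∉ rotation F) (hy : y ∈ involutionCentralizer F) (hy' : y ∉ rotation F) :
    x * y ∈ rotation F := by
  induction x using QuotientGroup.induction_on with
  | _ g =>
  induction y using QuotientGroup.induction_on with
  | _ h =>
    obtain ⟨h1, h2⟩ := anticommute_of_not_mem_rotation hx hx'
    obtain ⟨h3, h4⟩ := anticommute_of_not_mem_rotation hy hy'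
    refine (mk_mem_rotation_iff (g * h)).2 ?_
    simp only [mul_apply_fin_two, h1, h2, h3, h4]
    constructor <;> ring

theorem sq_eq_one_of_conj_mem (h2 : (2 : F) ≠ 0) (y : PSL(2, F))
    (hy : y ∉ involutionCentralizer F) (x : PSL(2, F)) (hx : x ∈ rotation F)
    (hxy : y⁻¹ * x * y ∈ involutionCentralizer F) : x ^ 2 = 1 := by
  by_contra hx2
  refine hy (mem_involutionCentralizer_of_conj_mem h2 hx hx2 ?_)
  by_contra hrot
  have h := mul_self_eq_one_of_not_mem_rotation hxy hrot
  refine hx2 ?_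
  calc x ^ 2 = y * ((y⁻¹ * x * y) * (y⁻¹ * x * y)) * y⁻¹ := by rw [sq]; group
    _ = 1 := by rw [h]; group

variable [Fintype F]

theorem two_ne_zero_of_odd_card (h : Odd (Fintype.card F)) : (2 : F) ≠ 0 :=
  Ring.two_ne_zero fun hc ↦ by
    have := FiniteField.even_card_of_char_two hc
    rw [Nat.odd_iff] at h
    omega

theorem one_add_sq_ne_zero (hF : Fintype.card F % 4 = 3) (t : F) : 1 + t ^ 2 ≠ 0 := fun h ↦
  FiniteField.isSquare_neg_one_iff.not_left.2 hF ⟨t, by linear_combination -h⟩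

/-- The number of points on the unit circle, by stereographic projection. -/
theorem card_circle (hF : Fintype.card F % 4 = 3) :
    Nat.card {v : F × F // v.1 ^ 2 + v.2 ^ 2 = 1} = Fintype.card F + 1 := by
  classical
  have h2 : (2 : F) ≠ 0 := two_ne_zero_of_odd_card (Nat.odd_iff.2 (by omega))
  have hne := one_add_sq_ne_zero hF
  let e : Option F ≃ {v : F × F // v.1 ^ 2 + v.2 ^ 2 = 1} :=
    { toFun := fun t ↦ t.elim ⟨(-1, 0), by simp⟩ fun t ↦
        ⟨((1 - t ^ 2) / (1 + t ^ 2), 2 * t / (1 + t ^ 2)), by have := hne t; field_simp; ring⟩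
      invFun := fun v ↦ if v.1.1 = -1 then none else some (v.1.2 / (1 + v.1.1))
      left_inv := by
        rintro (_ | t)
        · simp
        · have := hne t
          have h1 : (1 - t ^ 2) / (1 + t ^ 2) ≠ -1 := by
            rw [Ne, div_eq_iff this]
            intro h
            exact h2 (by linear_combination h)
          have h3 : 1 + (1 - t ^ 2) / (1 + t ^ 2) = 2 / (1 + t ^ 2) := by field_simp; ring
          simp only [Option.elim, h1, if_false, h3]
          field_simp
      right_inv := by
        rintro ⟨⟨a, b⟩, h⟩
        dsimp only at h
        by_cases ha : a = -1
        · have hb : b = 0 := by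
            have : b ^ 2 = 0 := by rw [ha] at h; linear_combination h
            simpa using this
          simp [ha, hb]
        · have ha' : 1 + a ≠ 0 := fun h ↦ ha (by linear_combination h)
          have hb : 1 + (b / (1 + a)) ^ 2 = 2 / (1 + a) := by
            field_simp
            linear_combination h
          have hb' : 1 - (b / (1 + a)) ^ 2 = 2 * a / (1 + a) := by
            field_simp
            linear_combination -h
          simp only [ha, if_false, Option.elim, hb, hb', Subtype.mk.injEq, Prod.mk.injEq]
          constructor <;> field_simp }
  rw [← Nat.card_congr e]
  simp

theorem card_rotationSL (hF : Fintype.card F % 4 = 3) :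
    Nat.card (rotationSL F) = Fintype.card F + 1 := by
  rw [← card_circle hF]
  refine Nat.card_congr
    { toFun := fun g ↦ ⟨(g.1 0 0, g.1 0 1), ?_⟩
      invFun := fun v ↦ ⟨⟨!![v.1.1, v.1.2; -v.1.2, v.1.1], ?_⟩, ?_⟩
      left_inv := ?_
      right_inv := fun v ↦ rfl }
  · obtain ⟨h1, h0⟩ := (mem_rotationSL_iff g.1).1 g.2
    have hd := det_eq_one g.1
    rw [h1, h0] at hd
    linear_combination hd
  · rw [Matrix.det_fin_two_of]
    linear_combination v.2
  · exact (mem_rotationSL_iff _).2 ⟨rfl, rfl⟩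
  · intro g
    obtain ⟨h1, h0⟩ := (mem_rotationSL_iff g.1).1 g.2
    exact Subtype.ext (sl2_ext rfl rfl h0.symm h1.symm)

theorem card_rotation (hF : Fintype.card F % 4 = 3) :
    Nat.card (rotation F) * 2 = Fintype.card F + 1 := by
  have h2 : (2 : F) ≠ 0 := two_ne_zero_of_odd_card (Nat.odd_iff.2 (by omega))
  have hcomap : (rotation F).comap (QuotientGroup.mk' _) = rotationSL F := by
    ext g
    rw [mem_rotationSL_iff, ← mk_mem_rotation_iff]
    rfl
  have h := (rotationSL F).card_mul_index
  rw [Subgroup.card_eq_card_quotient_mul_card_subgroup (Subgroup.center SL(2, F)), card_center h2,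
    ← (rotation F).card_mul_index, ← hcomap,
    Subgroup.index_comap_of_surjective _ (QuotientGroup.mk'_surjective _), hcomap,
    card_rotationSL hF] at h
  refine Nat.eq_of_mul_eq_mul_right (Nat.pos_of_ne_zero (rotation F).index_ne_zero_of_finite) ?_
  rw [h]
  ring

theorem isCyclic_rotationSL (h2 : (2 : F) ≠ 0) : IsCyclic (rotationSL F) := by
  obtain ⟨i, hi⟩ := IsAlgClosed.exists_pow_nat_eq (-1 : AlgebraicClosure F) two_pos
  let a := algebraMap F (AlgebraicClosure F)
  let f : rotationSL F →* AlgebraicClosure F :=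
    { toFun := fun g ↦ a (g.1 0 0) + a (g.1 0 1) * i
      map_one' := by simp
      map_mul' := by
        intro g h
        obtain ⟨h1, h0⟩ := (mem_rotationSL_iff h.1).1 h.2
        simp only [Subgroup.coe_mul, mul_apply_fin_two, h1, h0, map_add, map_mul, map_neg]
        linear_combination (-(a (g.1 0 1) * a (h.1 0 1))) * hi }
  refine isCyclic_of_injective_ringHom f ((injective_iff_map_eq_one f).2 fun g hg ↦ ?_)
  obtain ⟨h1, h0⟩ := (mem_rotationSL_iff g.1).1 g.2
  have hd := congrArg a (det_eq_one g.1)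
  rw [h1, h0, map_sub, map_mul, map_mul, map_neg, map_one] at hd
  have hg' : a (g.1 0 0) + a (g.1 0 1) * i = 1 := hg
  have hg'' : a (g.1 0 0) - a (g.1 0 1) * i = 1 := by
    linear_combination hd - (a (g.1 0 1)) ^ 2 * hi - (a (g.1 0 0) - a (g.1 0 1) * i) * hg'
  have h2' : (2 : AlgebraicClosure F) ≠ 0 := by
    rw [← map_ofNat a 2]
    exact (map_ne_zero a).2 h2
  have ha : g.1 0 0 = 1 := by
    refine a.injective (mul_left_cancel₀ h2' ?_)
    rw [map_one]
    linear_combination hg' + hg''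
  have hb : g.1 0 1 = 0 := by
    have hi0 : i ≠ 0 := by
      rintro rfl
      norm_num at hi
    refine a.injective (mul_right_cancel₀ hi0 ?_)
    rw [ha, map_one] at hg'
    rw [map_zero]
    linear_combination hg'
  exact Subtype.ext (sl2_ext (by simpa using ha) (by simpa using hb) (by simp [h0, hb])
    (by simp [h1, ha]))

theorem isCyclic_rotation (h2 : (2 : F) ≠ 0) : IsCyclic (rotation F) :=
  have := isCyclic_rotationSL h2
  isCyclic_of_surjective _ ((QuotientGroup.mk' _).subgroupMap_surjective (rotationSL F))

theorem exists_reflection (h2 : (2 : F) ≠ 0) :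
    ∃ x ∈ involutionCentralizer F, x ∉ rotation F := by
  obtain ⟨p, hp⟩ := CharP.exists F
  have : NeZero p := ⟨CharP.char_ne_zero_of_finite F p⟩
  obtain ⟨a, b, hab⟩ := CharP.sq_add_sq F p (-1)
  push_cast at hab
  let g : SL(2, F) := ⟨!![(a : F), b; b, -a], by
    rw [Matrix.det_fin_two_of]
    linear_combination -hab⟩
  refine ⟨g, (mk_mem_involutionCentralizer_iff g).2 (.inr ⟨rfl, rfl⟩), fun h ↦ ?_⟩
  obtain ⟨h1, h0⟩ := (mk_mem_rotation_iff g).1 h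
  have ha : -(a : F) = a := h1
  have hb : (b : F) = -b := h0
  have ha0 : (a : F) = 0 := by
    have : 2 * (a : F) = 0 := by linear_combination -ha
    simpa [h2] using this
  have hb0 : (b : F) = 0 := by
    have : 2 * (b : F) = 0 := by linear_combination hb
    simpa [h2] using this
  simp [ha0, hb0] at hab

theorem card_involutionCentralizer (hF : Fintype.card F % 4 = 3) :
    Nat.card (involutionCentralizer F) = Fintype.card F + 1 := by
  have h2 : (2 : F) ≠ 0 := two_ne_zero_of_odd_card (Nat.odd_iff.2 (by omega))
  obtain ⟨s, hs, hs'⟩ := exists_reflection h2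
  have hidx : ((rotation F).subgroupOf (involutionCentralizer F)).index = 2 := by
    rw [Subgroup.index_eq_two_iff]
    refine ⟨⟨s, hs⟩, fun b ↦ ?_⟩
    simp only [Subgroup.mem_subgroupOf, Subgroup.coe_mul]
    by_cases hb : (b : PSL(2, F)) ∈ rotation F
    · exact .inr ⟨hb, fun h ↦ hs' (((rotation F).mul_mem_cancel_left hb).1 h)⟩
    · exact .inl ⟨mul_mem_rotation b.2 hb hs hs', hb⟩
  rw [← ((rotation F).subgroupOf (involutionCentralizer F)).card_mul_index, hidx,
    Nat.card_congr (Subgroup.subgroupOfEquivOfLe rotation_le_involutionCentralizer).toEquiv,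
    card_rotation hF]

theorem nonempty_involutionCentralizer_mulEquiv (hF : Fintype.card F % 4 = 3) :
    Nonempty (involutionCentralizer F ≃* DihedralGroup ((Fintype.card F + 1) / 2)) := by
  have h2 : (2 : F) ≠ 0 := two_ne_zero_of_odd_card (Nat.odd_iff.2 (by omega))
  have hcard := card_rotation hF
  obtain ⟨s, hs, hs'⟩ := exists_reflection h2
  obtain ⟨c, hc⟩ := (isCyclic_rotation h2).exists_ofOrder_eq_natCard
  have hle (x : PSL(2, F)) (hx : x ∈ Subgroup.zpowers (c : PSL(2, F))) : x ∈ rotation F :=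
    (Subgroup.zpowers_le.2 c.2) hx
  refine nonempty_mulEquiv_dihedralGroup (by omega)
    (c := ⟨c, rotation_le_involutionCentralizer c.2⟩) (s := ⟨s, hs⟩) ?_ ?_ ?_ ?_ ?_
  · rw [Subgroup.orderOf_mk, Subgroup.orderOf_coe, hc]
    omega
  · rintro ⟨n, hn⟩
    exact hs' (hle s ⟨n, congrArg Subtype.val hn⟩)
  · exact Subtype.ext (mul_self_eq_one_of_not_mem_rotation hs hs')
  · exact Subtype.ext (conj_eq_inv_of_not_mem_rotation hs hs' c.2)
  · rw [card_involutionCentralizer hF]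
    omega

/-- The index of a subgroup of order `q + 1` in `PSL(2, F)`. -/
theorem index_eq_of_card_eq (h2 : (2 : F) ≠ 0) {H : Subgroup PSL(2, F)}
    (hH : Nat.card H = Fintype.card F + 1) :
    H.index * 2 = Fintype.card F * (Fintype.card F - 1) := by
  have h := card_psl2 h2
  rw [← H.card_mul_index, hH] at h
  refine Nat.eq_of_mul_eq_mul_left (Nat.succ_pos (Fintype.card F)) ?_
  rw [Nat.succ_eq_add_one, ← mul_assoc, h]
  ring

theorem isCoatom_involutionCentralizer (hF : Fintype.card F % 4 = 3) (h7 : 7 < Fintype.card F) :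
    IsCoatom (involutionCentralizer F) := by
  have h2 : (2 : F) ≠ 0 := two_ne_zero_of_odd_card (Nat.odd_iff.2 (by omega))
  have hidx := index_eq_of_card_eq h2 (card_involutionCentralizer hF)
  have hpp : IsPrimePow (Fintype.card F) := FiniteField.isPrimePow_card F
  have := isCyclic_rotation h2
  obtain ⟨k, hk⟩ : ∃ k, Fintype.card F + 1 = 4 * k := ⟨(Fintype.card F + 1) / 4, by omega⟩
  have hk4 : k ≠ 4 := by
    rintro rfl
    rw [show Fintype.card F = 15 by omega] at hpp
    have := (Nat.Coprime.isPrimePow_dvd_mul (a := 3) (b := 5) (by norm_num) hpp).1 (by norm_num)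
    omega
  have hk14 : k ≠ 14 := by
    rintro rfl
    rw [show Fintype.card F = 55 by omega] at hpp
    have := (Nat.Coprime.isPrimePow_dvd_mul (a := 5) (b := 11) (by norm_num) hpp).1 (by norm_num)
    omega
  have hidx' : (involutionCentralizer F).index = (4 * k - 1) * (2 * k - 1) := by
    rw [show Fintype.card F = 4 * k - 1 by omega,
      show 4 * k - 1 - 1 = (2 * k - 1) * 2 by omega, ← mul_assoc] at hidx
    exact Nat.eq_of_mul_eq_mul_right two_pos hidx
  refine ⟨fun h ↦ ?_, fun M hM ↦ ?_⟩
  · rw [h, Subgroup.index_top] at hidx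
    have : 7 * 6 ≤ Fintype.card F * (Fintype.card F - 1) := Nat.mul_le_mul (by omega) (by omega)
    omega
  · have hmod : (involutionCentralizer F).relIndex M ≡ 1 [MOD k] :=
      Subgroup.relIndex_modEq_one rotation_le_involutionCentralizer hM.le
        (by have := card_rotation hF; omega) (sq_eq_one_of_conj_mem h2)
    have hmul := Subgroup.relIndex_mul_index hM.le
    rw [hidx'] at hmul
    rcases eq_one_or_eq_one_of_mul_eq (by omega) hk4 hk14 hmul hmod with h | h
    · exact absurd (Subgroup.relIndex_eq_one.1 h) hM.not_ge
    · exact Subgroup.index_eq_one.1 h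

end PSL2

/-- Two commuting involutions generate a four-group. -/
theorem exists_subgroup_of_commuting_involutions {G : Type*} [Group G] {x y : G}
    (hx : x * x = 1) (hy : y * y = 1) (hxy : y * x = x * y) (hx1 : x ≠ 1) (hy1 : y ≠ 1)
    (hne : x ≠ y) : ∃ V : Subgroup G, (V : Set G) = {1, x, y, x * y} ∧ Nat.card V = 4 := by
  have hxi : x⁻¹ = x := inv_eq_of_mul_eq_one_left hx
  have hyi : y⁻¹ = y := inv_eq_of_mul_eq_one_left hy
  have hxxy : x * (x * y) = y := by rw [← mul_assoc, hx, one_mul]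
  have hyxy : y * (x * y) = x := by rw [← hxy, ← mul_assoc, hy, one_mul]
  have hxyx : x * y * x = y := by rw [mul_assoc, hxy, hxxy]
  have hxyy : x * y * y = x := by rw [mul_assoc, hy, mul_one]
  have hxyxy : x * y * (x * y) = 1 := by rw [mul_assoc, hyxy, hx]
  refine ⟨⟨⟨⟨{1, x, y, x * y}, ?_⟩, ?_⟩, ?_⟩, rfl, ?_⟩
  · rintro a b (rfl | rfl | rfl | rfl) (rfl | rfl | rfl | rfl) <;> simp [*]
  · simp
  · rintro a (rfl | rfl | rfl | rfl) <;> simp [*]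
  · have hxy1 : x * y ≠ 1 := fun h ↦ hne ((eq_inv_of_mul_eq_one_left h).trans hyi)
    classical
    change Nat.card ({1, x, y, x * y} : Set G) = 4
    rw [show ({1, x, y, x * y} : Set G) = (({1, x, y, x * y} : Finset G) : Set G) by simp,
      Nat.card_coe_set_eq, Set.ncard_coe_finset,
      Finset.card_insert_of_notMem, Finset.card_insert_of_notMem, Finset.card_pair]
    · simpa using hx1
    · simpa using ⟨hne, hy1⟩
    · simpa using ⟨hx1.symm, hy1.symm, hxy1.symm⟩

namespace PSL2

variable {F : Type*} [Field F] [Fintype F]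

theorem exists_subgroup_of_card_eq_seven (hF : Fintype.card F = 7) :
    ∃ K : Subgroup PSL(2, F), K ≠ ⊤ ∧ 24 ∣ Nat.card K := by
  have h2 : (2 : F) ≠ 0 := two_ne_zero_of_odd_card (Nat.odd_iff.2 (by omega))
  have h7 : (7 : F) = 0 := by
    have := FiniteField.cast_card_eq_zero F
    rwa [hF] at this
  have hcard : Nat.card PSL(2, F) = 168 := by
    have := card_psl2 h2
    rw [hF] at this
    omega
  let x : SL(2, F) := ⟨!![3, 1; 4, -3], by rw [Matrix.det_fin_two_of]; grind⟩
  let y : SL(2, F) := ⟨!![3, 4; 1, -3], by rw [Matrix.det_fin_two_of]; grind⟩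
  let w : SL(2, F) := ⟨!![2, 0; 0, 4], by rw [Matrix.det_fin_two_of]; grind⟩
  let u : SL(2, F) := ⟨!![1, 1; 0, 1], by rw [Matrix.det_fin_two_of]; grind⟩
  have hx00 : x 0 0 = 3 := rfl
  have hx01 : x 0 1 = 1 := rfl
  have hx10 : x 1 0 = 4 := rfl
  have hx11 : x 1 1 = -3 := rfl
  have hy00 : y 0 0 = 3 := rfl
  have hy01 : y 0 1 = 4 := rfl
  have hy10 : y 1 0 = 1 := rfl
  have hy11 : y 1 1 = -3 := rfl
  have hw00 : w 0 0 = 2 := rfl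
  have hw01 : w 0 1 = 0 := rfl
  have hw10 : w 1 0 = 0 := rfl
  have hw11 : w 1 1 = 4 := rfl
  have hu00 : u 0 0 = 1 := rfl
  have hu01 : u 0 1 = 1 := rfl
  have hu10 : u 1 0 = 0 := rfl
  have hu11 : u 1 1 = 1 := rfl
  clear_value x y w u
  have hxx : (x * x : PSL(2, F)) = 1 := (mk_eq_mk_iff (x * x) 1).2 <| .inr <| by
    apply sl2_ext <;> simp [mul_apply_fin_two, *] <;> grind
  have hyy : (y * y : PSL(2, F)) = 1 := (mk_eq_mk_iff (y * y) 1).2 <| .inr <| by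
    apply sl2_ext <;> simp [mul_apply_fin_two, *] <;> grind
  have hyx : (y * x : PSL(2, F)) = x * y := (mk_eq_mk_iff (y * x) (x * y)).2 <| .inr <| by
    apply sl2_ext <;> simp [Matrix.mul_apply, *] <;> grind
  have hwx : (w * x : PSL(2, F)) = y * w := (mk_eq_mk_iff (w * x) (y * w)).2 <| .inl <| by
    apply sl2_ext <;> simp [mul_apply_fin_two, *] <;> grind
  have hwy : (w * y : PSL(2, F)) = x * y * w :=
    (mk_eq_mk_iff (w * y) (x * y * w)).2 <| .inl <| by
    apply sl2_ext <;> simp [mul_apply_fin_two, *] <;> grind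
  have hwww : (w ^ 3 : PSL(2, F)) = 1 := (mk_eq_mk_iff (w ^ 3) 1).2 <| .inl <| by
    rw [pow_succ, sq]
    apply sl2_ext <;> simp [mul_apply_fin_two, *] <;> grind
  have hne {g h : SL(2, F)} (h1 : g 0 1 ≠ h 0 1) (h2 : g 0 1 ≠ -h 0 1) :
      (g : PSL(2, F)) ≠ h := by
    intro he
    rcases (mk_eq_mk_iff g h).1 he with rfl | rfl
    · exact h1 rfl
    · exact h2 rfl
  obtain ⟨V, hV, hV4⟩ := exists_subgroup_of_commuting_involutions hxx hyy hyx
    (hne (h := 1) (by simp [hx01]) (by simp [hx01]))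
    (hne (h := 1) (by simp [hy01]; grind) (by simp [hy01]; grind))
    (hne (by grind) (by grind))
  have hmem (v : PSL(2, F)) : v ∈ V ↔ v = 1 ∨ v = x ∨ v = y ∨ v = x * y := by
    rw [← SetLike.mem_coe, hV]
    rfl
  refine ⟨Subgroup.normalizer (V : Set PSL(2, F)), fun htop ↦ ?_, ?_⟩
  · have hu : (u : PSL(2, F)) ∈ Subgroup.normalizer (V : Set PSL(2, F)) := htop ▸ Subgroup.mem_top _
    have hux := (Subgroup.mem_normalizer_iff.1 hu x).1 ((hmem x).2 (.inr (.inl rfl)))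
    have hne' {v : SL(2, F)} (hv : v 0 0 ≠ 0) : (u * x * (u : PSL(2, F))⁻¹ : PSL(2, F)) ≠ v := by
      rw [Ne, mul_inv_eq_iff_eq_mul]
      intro he
      have h00 : (u * x) 0 0 = 0 := by simp only [mul_apply_fin_two, *]; grind
      have h00' : (v * u) 0 0 = v 0 0 := by simp only [mul_apply_fin_two, *]; ring
      rcases (mk_eq_mk_iff (u * x) (v * u)).1 he with h | h
      · exact hv (by rw [← h00', ← h, h00])
      · exact hv (by rw [← h00', ← neg_eq_iff_eq_neg.2 h]; simpa using h00)
    rcases (hmem _).1 hux with h | h | h | h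
    · exact hne' (v := 1) (by simp) h
    · exact hne' (by grind) h
    · exact hne' (by grind) h
    · exact hne' (v := x * y) (by simp only [mul_apply_fin_two, *]; grind) h
  · have hw : (w : PSL(2, F)) ∈ Subgroup.normalizer (V : Set PSL(2, F)) := by
      refine Subgroup.mem_normalizer_fintype fun v hv ↦ ?_
      have hwx' : (w * x * (w : PSL(2, F))⁻¹ : PSL(2, F)) = y := mul_inv_eq_iff_eq_mul.2 hwx
      have hwy' : (w * y * (w : PSL(2, F))⁻¹ : PSL(2, F)) = x * y := mul_inv_eq_iff_eq_mul.2 hwy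
      have hyV := (hmem y).2 (.inr (.inr (.inl rfl)))
      have hxyV := (hmem (x * y)).2 (.inr (.inr (.inr rfl)))
      rcases (hmem v).1 hv with rfl | rfl | rfl | rfl
      · simp
      · rw [hwx']
        exact hyV
      · rw [hwy']
        exact hxyV
      · rw [← conj_mul, hwx', hwy']
        exact V.mul_mem hyV hxyV
    have h3 : 3 ∣ Nat.card (Subgroup.normalizer (V : Set PSL(2, F))) := by
      have hord : orderOf (w : PSL(2, F)) = 3 := orderOf_eq_prime hwww fun h ↦ by
        rcases (mk_eq_mk_iff w 1).1 h with h | h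
        · have := congrArg (fun g : SL(2, F) ↦ g 0 0) h
          simp [hw00] at this
          grind
        · have := congrArg (fun g : SL(2, F) ↦ g 0 0) h
          simp [hw00] at this
          grind
      rw [← hord]
      exact Subgroup.orderOf_dvd_natCard _ hw
    have h8 : 8 ∣ Nat.card (Subgroup.normalizer (V : Set PSL(2, F))) :=
      Nat.modEq_zero_iff_dvd.1
        ((Sylow.card_normalizer_modEq_card (p := 2) (n := 2) hV4).trans (by rw [hcard]; rfl))
    exact Nat.Coprime.mul_dvd_of_dvd_of_dvd (by norm_num : Nat.Coprime 3 8) h3 h8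

/-- Over the field with seven elements no subgroup of order eight is maximal. -/
theorem not_isCoatom_of_card_eq_eight (hF : Fintype.card F = 7) {H : Subgroup PSL(2, F)}
    (hH : Nat.card H = 8) : ¬ IsCoatom H := by
  intro hmax
  have h2 : (2 : F) ≠ 0 := two_ne_zero_of_odd_card (Nat.odd_iff.2 (by omega))
  have hidx := index_eq_of_card_eq h2 (by rw [hH, hF] : Nat.card H = Fintype.card F + 1)
  rw [hF] at hidx
  obtain ⟨K, hK, m, hm⟩ := exists_subgroup_of_card_eq_seven hF
  have hcard := K.card_mul_index
  rw [← H.card_mul_index, hH, hm] at hcard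
  have hdvd : K.index ∣ 7 := ⟨m, by linarith⟩
  have hK7 : K.index = 7 := ((Nat.dvd_prime (by norm_num)).1 hdvd).resolve_left fun h ↦
    hK (Subgroup.index_eq_one.1 h)
  have hp : IsPGroup 2 H := IsPGroup.of_card (n := 3) (by rw [hH]; norm_num)
  obtain ⟨v, hv⟩ := hp.nonempty_fixed_point_of_prime_not_dvd_card (PSL(2, F) ⧸ K)
    (by rw [← Subgroup.index_eq_card, hK7]; norm_num)
  have hle : H ≤ MulAction.stabilizer PSL(2, F) v := fun h hh ↦ hv ⟨h, hh⟩
  have hstab : (MulAction.stabilizer PSL(2, F) v).index = 7 := by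
    rw [MulAction.index_stabilizer_of_transitive, ← Subgroup.index_eq_card, hK7]
  rcases hmax.le_iff.1 hle with h | h
  · rw [h, Subgroup.index_top] at hstab
    omega
  · rw [h] at hstab
    omega

end PSL2

/-- `PSL₂(F)` for `F` a finite field of odd prime-power order `q ≥ 5` has a
maximal subgroup of odd index isomorphic to the dihedral group of order `q + 1`
(i.e. `DihedralGroup ((q+1)/2)`) iff `q > 7` and `q ≡ 3 (mod 4)`. -/
theorem psl2_maximal_odd_index_dihedral (q : ℕ) (hq_odd : Odd q) (hq_pp : IsPrimePow q)
    (hq5 : 5 ≤ q) (F : Type) [Field F] [Fintype F] (hF : Fintype.card F = q) :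
    (∃ H : Subgroup (Matrix.ProjectiveSpecialLinearGroup (Fin 2) F),
        IsCoatom H ∧ Odd H.index ∧ Nonempty (H ≃* DihedralGroup ((q + 1) / 2))) ↔
      7 < q ∧ q % 4 = 3 := by
  subst hF
  have h2 : (2 : F) ≠ 0 := PSL2.two_ne_zero_of_odd_card hq_odd
  rw [Nat.odd_iff] at hq_odd
  constructor
  · rintro ⟨H, hmax, hodd, ⟨e⟩⟩
    have hcard : Nat.card H = Fintype.card F + 1 := by
      rw [Nat.card_congr e.toEquiv, DihedralGroup.nat_card]
      omega
    have hidx := PSL2.index_eq_of_card_eq h2 hcard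
    have hmod : Fintype.card F % 4 = 3 := by
      rw [Nat.odd_iff] at hodd
      by_contra hne
      obtain ⟨j, hj⟩ : ∃ j, Fintype.card F - 1 = 4 * j := ⟨(Fintype.card F - 1) / 4, by omega⟩
      rw [hj, show Fintype.card F * (4 * j) = 4 * (Fintype.card F * j) by ring] at hidx
      omega
    refine ⟨?_, hmod⟩
    by_contra hle
    have h7 : Fintype.card F = 7 := by omega
    exact PSL2.not_isCoatom_of_card_eq_eight h7 (by rw [hcard, h7]) hmax
  · rintro ⟨h7, hmod⟩
    refine ⟨PSL2.involutionCentralizer F, PSL2.isCoatom_involutionCentralizer hmod h7, ?_,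
      PSL2.nonempty_involutionCentralizer_mulEquiv hmod⟩
    have hidx := PSL2.index_eq_of_card_eq h2 (PSL2.card_involutionCentralizer hmod)
    rw [show Fintype.card F - 1 = (Fintype.card F / 2) * 2 by omega, ← mul_assoc] at hidx
    rw [Nat.eq_of_mul_eq_mul_right two_pos hidx]
    exact Nat.odd_mul.2 ⟨Nat.odd_iff.2 hq_odd, Nat.odd_iff.2 (by omega)⟩
end

section
/- Let q₀ be an odd prime power, F₀ a finite field with q₀ elements, and F a finite field with q₀² elements. Then PSL₂(F) has a maximal subgroup H of odd index such that H is isomorphic to PGL₂(F₀). -/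
/-- The projective general linear group `PGL(n, R)`: the quotient of `GL(n, R)` by its
center. -/
def ProjectiveGeneralLinearGroup (n : Type*) [DecidableEq n] [Fintype n]
    (R : Type*) [CommRing R] : Type _ :=
  Matrix.GeneralLinearGroup n R ⧸ Subgroup.center (Matrix.GeneralLinearGroup n R)

noncomputable instance (n : Type*) [DecidableEq n] [Fintype n] (R : Type*) [CommRing R] :
    Group (ProjectiveGeneralLinearGroup n R) :=
  QuotientGroup.Quotient.group _

open Matrix

lemma ringChar_ne_two_of_odd_card {F : Type*} [Field F] [Finite F] (h : Odd (Nat.card F)) :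
    ringChar F ≠ 2 := by
  have := Fintype.ofFinite F
  intro hchar
  have h2 := FiniteField.even_card_of_char_two hchar
  rw [← Nat.card_eq_fintype_card, Nat.odd_iff.1 h] at h2
  exact one_ne_zero h2

/-- The subgroup of `SL₂(F)` consisting of the matrices that are proportional to a matrix with
entries in the subfield `k`. -/
def Subfield.proportionalSL {F : Type*} [Field F] (k : Subfield F) :
    Subgroup (SpecialLinearGroup (Fin 2) F) where
  carrier := {g | ∃ c : F, c ≠ 0 ∧ ∀ i j, c * g.1 i j ∈ k}
  one_mem' := ⟨1, one_ne_zero, fun i j => by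
    by_cases h : i = j
    · simp [h]
    · simp [h]⟩
  mul_mem' := by
    rintro g h ⟨c, hc, hg⟩ ⟨d, hd, hh⟩
    refine ⟨c * d, mul_ne_zero hc hd, fun i j => ?_⟩
    have key : c * d * (g * h).1 i j =
        c * g.1 i 0 * (d * h.1 0 j) + c * g.1 i 1 * (d * h.1 1 j) := by
      change c * d * (g.1 * h.1) i j = _
      rw [Matrix.mul_apply, Fin.sum_univ_two]
      ring
    rw [key]
    exact add_mem (mul_mem (hg _ _) (hh _ _)) (mul_mem (hg _ _) (hh _ _))
  inv_mem' := by
    rintro g ⟨c, hc, hg⟩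
    refine ⟨c, hc, fun i j => ?_⟩
    rw [SpecialLinearGroup.SL2_inv_expl]
    fin_cases i <;> fin_cases j
    · exact hg 1 1
    · simpa using hg 0 1
    · simpa using hg 1 0
    · exact hg 0 0

namespace Subfield

variable {F : Type*} [Field F] {k : Subfield F}

/-- The determinant-one matrix with the given entries. -/
def mkSL (a b c d : F) (h : a * d - b * c = 1) : SpecialLinearGroup (Fin 2) F :=
  ⟨!![a, b; c, d], by rw [det_fin_two_of, h]⟩

lemma mkSL_mem_proportionalSL {a b c d : F} (h : a * d - b * c = 1) (t : F) (ht : t ≠ 0)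
    (ha : t * a ∈ k) (hb : t * b ∈ k) (hc : t * c ∈ k) (hd : t * d ∈ k) :
    mkSL a b c d h ∈ k.proportionalSL := by
  refine ⟨t, ht, fun i j => ?_⟩
  fin_cases i <;> fin_cases j <;> assumption

lemma mkSL_mul {a b c d a' b' c' d' : F} (h : a * d - b * c = 1) (h' : a' * d' - b' * c' = 1) :
    mkSL a b c d h * mkSL a' b' c' d' h' =
      mkSL (a * a' + b * c') (a * b' + b * d') (c * a' + d * c') (c * b' + d * d')
        (by linear_combination (a' * d' - b' * c') * h + h') := by
  apply Subtype.ext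
  change !![a, b; c, d] * !![a', b'; c', d'] = !![_, _; _, _]
  rw [Matrix.mul_fin_two]

lemma mkSL_inv {a b c d : F} (h : a * d - b * c = 1) :
    (mkSL a b c d h)⁻¹ = mkSL d (-b) (-c) a (by linear_combination h) := by
  rw [inv_eq_iff_mul_eq_one, mkSL_mul]
  apply Subtype.ext
  ext i j
  fin_cases i <;> fin_cases j <;> simp [mkSL] <;> first | linear_combination h | ring

lemma exists_eq_mkSL (g : SpecialLinearGroup (Fin 2) F) :
    ∃ (a b c d : F) (h : a * d - b * c = 1), g = mkSL a b c d h :=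
  ⟨g.1 0 0, g.1 0 1, g.1 1 0, g.1 1 1, by rw [← det_fin_two]; exact g.2,
    Subtype.ext (eta_fin_two _)⟩

lemma exists_mul_add_of_notMem [Finite F] (hcard : Nat.card F = Nat.card k ^ 2)
    {x : F} (hx : x ∉ k) (y : F) : ∃ a ∈ k, ∃ b ∈ k, y = a * x + b := by
  let φ : k × k → F := fun p => p.1 * x + p.2
  have hinj : Function.Injective φ := by
    rintro ⟨a, b⟩ ⟨a', b'⟩ h
    have h : (a : F) * x + b = a' * x + b' := h
    have haa : a = a' := by
      by_contra hne
      have hne : (a : F) - a' ≠ 0 := sub_ne_zero.mpr fun e => hne (Subtype.ext e)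
      have : x = (b' - b) / (a - a') := by
        field_simp
        linear_combination h
      exact hx (this ▸ div_mem (sub_mem b'.2 b.2) (sub_mem a.2 a'.2))
    subst haa
    have : (b : F) = b' := by linear_combination h
    simp [Subtype.ext this]
  have hbij := (Nat.bijective_iff_injective_and_card φ).2
    ⟨hinj, by rw [Nat.card_prod, hcard, sq]⟩
  obtain ⟨⟨a, b⟩, h⟩ := hbij.2 y
  exact ⟨a, a.2, b, b.2, h.symm⟩

lemma exists_sq_eq_of_mem [Finite F] (hcard : Nat.card F = Nat.card k ^ 2)
    (hodd : Odd (Nat.card k)) {a : F} (ha : a ∈ k) : ∃ s : F, s ^ 2 = a := by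
  by_cases ha0 : a = 0
  · exact ⟨0, by simp [ha0]⟩
  have := Fintype.ofFinite F
  have := Fintype.ofFinite k
  have hpow : a ^ (Nat.card k - 1) = 1 := by
    have := FiniteField.pow_card_sub_one_eq_one (⟨a, ha⟩ : k) (by simpa [Subtype.ext_iff] using ha0)
    rw [← Nat.card_eq_fintype_card] at this
    exact congrArg Subtype.val this
  have hF : ringChar F ≠ 2 := ringChar_ne_two_of_odd_card (hcard ▸ hodd.pow)
  have hsq : IsSquare a := by
    rw [FiniteField.isSquare_iff hF ha0, ← Nat.card_eq_fintype_card, hcard]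
    obtain ⟨m, hm⟩ := hodd
    rw [hm] at hpow ⊢
    have : (2 * m + 1) ^ 2 / 2 = (2 * m + 1 - 1) * (m + 1) := by
      have : (2 * m + 1) ^ 2 = 2 * (2 * m * (m + 1)) + 1 := by ring
      rw [this]
      simp only [Nat.add_sub_cancel]
      omega
    rw [this, pow_mul, hpow, one_pow]
  obtain ⟨s, hs⟩ := hsq
  exact ⟨s, by rw [hs, sq]⟩

lemma affine_mem_proportionalSL {s b : F} (hs : s ≠ 0) (hs2 : s ^ 2 ∈ k) (hb : s * b ∈ k) :
    mkSL s b 0 s⁻¹ (by field_simp; ring) ∈ k.proportionalSL :=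
  mkSL_mem_proportionalSL _ s hs (by rwa [← sq]) hb (by simp) (by simp [hs])

lemma swap_mem_proportionalSL : mkSL 0 (-1) 1 0 (by ring) ∈ k.proportionalSL :=
  mkSL_mem_proportionalSL _ 1 one_ne_zero (by simp) (by simp) (by simp) (by simp)

/-- A subgroup of `SL₂(F)` containing `k.proportionalSL` and a unipotent upper triangular matrix
outside of it is everything. -/
lemma eq_top_of_unipotent_mem [Finite F] (hcard : Nat.card F = Nat.card k ^ 2)
    (hodd : Odd (Nat.card k)) {K : Subgroup (SpecialLinearGroup (Fin 2) F)}
    (hK : k.proportionalSL ≤ K) {b : F} (hb : b ∉ k) (hbK : mkSL 1 b 0 1 (by ring) ∈ K) :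
    K = ⊤ := by
  have upper (x : F) : mkSL 1 x 0 1 (by ring) ∈ K := by
    obtain ⟨a, ha, c, hc, rfl⟩ := exists_mul_add_of_notMem hcard hb x
    have hcK : mkSL 1 c 0 1 (by ring) ∈ K :=
      hK (mkSL_mem_proportionalSL _ 1 one_ne_zero (by simp) (by simpa) (by simp) (by simp))
    by_cases ha0 : a = 0
    · simpa [ha0] using hcK
    obtain ⟨s, rfl⟩ := exists_sq_eq_of_mem hcard hodd ha
    have hs : s ≠ 0 := by rintro rfl; simp at ha0
    have hd : mkSL s 0 0 s⁻¹ (by field_simp; ring) ∈ K :=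
      hK (affine_mem_proportionalSL hs ha (by simp))
    have := K.mul_mem (K.mul_mem (K.mul_mem hd hbK) (K.inv_mem hd)) hcK
    simp only [mkSL_inv, mkSL_mul] at this
    convert this using 2 <;> field_simp <;> ring
  have lower (x : F) : mkSL 1 0 x 1 (by ring) ∈ K := by
    have hw := hK (swap_mem_proportionalSL (k := k))
    have := K.mul_mem (K.mul_mem hw (upper (-x))) (K.inv_mem hw)
    simp only [mkSL_inv, mkSL_mul] at this
    convert this using 2 <;> ring
  refine eq_top_iff.2 fun g _ => ?_
  refine SL2.transvection_induction (· ∈ K) (fun i j hij c => ?_) (fun _ _ => K.mul_mem) g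
  fin_cases i <;> fin_cases j
  · exact absurd rfl hij
  · convert upper c
    ext i j
    fin_cases i <;> fin_cases j <;> simp [mkSL, SpecialLinearGroup.transvection_coe]
  · convert lower c
    ext i j
    fin_cases i <;> fin_cases j <;> simp [mkSL, SpecialLinearGroup.transvection_coe]
  · exact absurd rfl hij

/-- If every unipotent upper triangular matrix of `K` has entries in `k`, then every upper
triangular matrix of `K` is proportional to one with entries in `k`. -/
lemma mem_proportionalSL_of_upper {K : Subgroup (SpecialLinearGroup (Fin 2) F)}
    (hK : k.proportionalSL ≤ K) (hu : ∀ b : F, mkSL 1 b 0 1 (by ring) ∈ K → b ∈ k)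
    {g : SpecialLinearGroup (Fin 2) F} (hg : g ∈ K) (hg0 : g.1 1 0 = 0) :
    g ∈ k.proportionalSL := by
  obtain ⟨a, b, c, d, h, rfl⟩ := exists_eq_mkSL g
  obtain rfl : c = 0 := hg0
  have ha : a ≠ 0 := by rintro rfl; simp at h
  obtain rfl : d = a⁻¹ := by field_simp; linear_combination h
  have h1 : mkSL 1 1 0 1 (by ring) ∈ K :=
    hK (mkSL_mem_proportionalSL _ 1 one_ne_zero (by simp) (by simp) (by simp) (by simp))
  have ha2 : a ^ 2 ∈ k := by
    apply hu
    have := K.mul_mem (K.mul_mem hg h1) (K.inv_mem hg)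
    simp only [mkSL_inv, mkSL_mul] at this
    convert this using 2 <;> field_simp <;> ring
  refine affine_mem_proportionalSL ha ha2 (hu _ ?_)
  have := K.mul_mem hg (K.inv_mem (hK (affine_mem_proportionalSL ha ha2 (b := 0) (by simp))))
  simp only [mkSL_inv, mkSL_mul] at this
  convert this using 2 <;> field_simp <;> ring

section MoebiusAction

open scoped Classical OnePoint

/-- The action of `SL₂(F)` on the projective line by Möbius transformations. -/
noncomputable abbrev moebiusAction : MulAction (SpecialLinearGroup (Fin 2) F) (OnePoint F) :=
  MulAction.compHom (OnePoint F) SpecialLinearGroup.toGL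

attribute [local instance] moebiusAction

lemma smul_infty (g : SpecialLinearGroup (Fin 2) F) :
    g • (∞ : OnePoint F) = if g.1 1 0 = 0 then ∞ else ((g.1 0 0 / g.1 1 0 : F) : OnePoint F) :=
  OnePoint.smul_infty_eq_ite (SpecialLinearGroup.toGL g)

lemma mem_stabilizer_infty {g : SpecialLinearGroup (Fin 2) F} :
    g ∈ MulAction.stabilizer (SpecialLinearGroup (Fin 2) F) (∞ : OnePoint F) ↔ g.1 1 0 = 0 :=
  OnePoint.smul_infty_eq_self_iff (g := SpecialLinearGroup.toGL g)

lemma relIndex_stabilizer_infty (K : Subgroup (SpecialLinearGroup (Fin 2) F)) :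
    (MulAction.stabilizer (SpecialLinearGroup (Fin 2) F) (∞ : OnePoint F)).relIndex K =
      (MulAction.orbit K (∞ : OnePoint F)).ncard := by
  rw [← MulAction.index_stabilizer]
  rfl

lemma mkSL_smul_infty_of_ne {a b c d : F} (h : a * d - b * c = 1) (hc : c ≠ 0) :
    mkSL a b c d h • (∞ : OnePoint F) = ((a / c : F) : OnePoint F) := by
  rw [smul_infty]
  exact if_neg hc

lemma mkSL_smul_coe {s b x : F} (h : s * s⁻¹ - b * 0 = 1) (hs : s ≠ 0) :
    mkSL s b 0 s⁻¹ h • (x : OnePoint F) = ((s ^ 2 * x + s * b : F) : OnePoint F) := by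
  have := OnePoint.smul_some_eq_ite (g := SpecialLinearGroup.toGL (mkSL s b 0 s⁻¹ h)) (k := x)
  refine this.trans ?_
  change (if 0 * x + s⁻¹ = 0 then ∞ else
    (((s * x + b) / (0 * x + s⁻¹) : F) : OnePoint F)) = _
  rw [if_neg (by simpa using hs)]
  congr 1
  field_simp
  ring

lemma orbit_proportionalSL_infty :
    MulAction.orbit k.proportionalSL (∞ : OnePoint F) =
      Set.range (OnePoint.map (Subtype.val : k → F)) := by
  ext x
  constructor
  · rintro ⟨⟨g, c, hc, hg⟩, rfl⟩
    change g • (∞ : OnePoint F) ∈ _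
    rw [smul_infty]
    split_ifs with h0
    · exact ⟨∞, rfl⟩
    · refine ⟨((⟨g.1 0 0 / g.1 1 0, ?_⟩ : k) : OnePoint k), rfl⟩
      rw [← mul_div_mul_left _ _ hc]
      exact div_mem (hg _ _) (hg _ _)
  · rintro ⟨y, rfl⟩
    induction y using OnePoint.rec with
    | infty => exact MulAction.mem_orbit_self _
    | coe y =>
      refine ⟨⟨mkSL y (-1) 1 0 (by ring), mkSL_mem_proportionalSL _ 1 one_ne_zero (by simp)
        (by simp) (by simp) (by simp)⟩, ?_⟩
      refine (mkSL_smul_infty_of_ne (by ring) one_ne_zero).trans ?_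
      simp

lemma card_onePoint (α : Type*) [Finite α] : Nat.card (OnePoint α) = Nat.card α + 1 :=
  Finite.card_option

lemma ncard_orbit_proportionalSL_infty [Finite F] :
    (MulAction.orbit k.proportionalSL (∞ : OnePoint F)).ncard = Nat.card k + 1 := by
  rw [orbit_proportionalSL_infty, ← Nat.card_coe_set_eq, Nat.card_range_of_injective, card_onePoint]
  exact Option.map_injective Subtype.val_injective

/-- If `K` moves `∞` only to points of the projective line over `k`, then `K` is contained in
`k.proportionalSL`. -/
lemma le_proportionalSL_of_orbit_subset {K : Subgroup (SpecialLinearGroup (Fin 2) F)}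
    (hK : k.proportionalSL ≤ K)
    (horb : MulAction.orbit K (∞ : OnePoint F) ⊆ MulAction.orbit k.proportionalSL (∞ : OnePoint F)) :
    K ≤ k.proportionalSL := by
  have upper (g : SpecialLinearGroup (Fin 2) F) (hg : g ∈ K) (hg0 : g.1 1 0 = 0) :
      g ∈ k.proportionalSL := by
    obtain ⟨a, b, c, d, h, rfl⟩ := exists_eq_mkSL g
    obtain rfl : c = 0 := hg0
    have ha : a ≠ 0 := by rintro rfl; simp at h
    obtain rfl : d = a⁻¹ := by field_simp; linear_combination h
    have himage (y : F) (hy : y ∈ k) : a ^ 2 * y + a * b ∈ k := by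
      have hmem : ((a ^ 2 * y + a * b : F) : OnePoint F) ∈ MulAction.orbit K (∞ : OnePoint F) := by
        refine ⟨⟨_, K.mul_mem hg (hK (mkSL_mem_proportionalSL (a := y) (b := -1) (c := 1) (d := 0)
          (by ring) 1 one_ne_zero (by simpa) (by simp) (by simp) (by simp)))⟩, ?_⟩
        change (_ * _ : SpecialLinearGroup (Fin 2) F) • (∞ : OnePoint F) = _
        rw [mul_smul, mkSL_smul_infty_of_ne _ one_ne_zero, mkSL_smul_coe _ ha, div_one]
      have := horb hmem
      rw [orbit_proportionalSL_infty] at this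
      obtain ⟨z, hz⟩ := this
      induction z using OnePoint.rec with
      | infty => simp at hz
      | coe z =>
        rw [OnePoint.map_some, OnePoint.coe_eq_coe] at hz
        exact hz ▸ z.2
    have h0 : a * b ∈ k := by simpa using himage 0 (zero_mem _)
    exact affine_mem_proportionalSL ha (by simpa using sub_mem (himage 1 (one_mem _)) h0) h0
  intro g hg
  obtain ⟨⟨h, hh⟩, hhg⟩ := horb ⟨⟨g, hg⟩, rfl⟩
  have hhg : h • (∞ : OnePoint F) = g • ∞ := hhg
  have := upper (h⁻¹ * g) (K.mul_mem (K.inv_mem (hK hh)) hg) (by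
    rw [← mem_stabilizer_infty, MulAction.mem_stabilizer_iff, mul_smul, ← hhg, inv_smul_smul])
  simpa using mul_mem hh this

/-- A subgroup properly containing `k.proportionalSL` acts transitively on the projective line. -/
lemma orbit_infty_eq_univ [Finite F] (hcard : Nat.card F = Nat.card k ^ 2)
    (hodd : Odd (Nat.card k)) {K : Subgroup (SpecialLinearGroup (Fin 2) F)}
    (hK : k.proportionalSL < K) : MulAction.orbit K (∞ : OnePoint F) = Set.univ := by
  obtain ⟨x, hxK, hx⟩ := Set.not_subset.1 fun h =>
    hK.not_ge (le_proportionalSL_of_orbit_subset hK.le h)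
  refine Set.eq_univ_of_forall fun y => ?_
  by_cases hy : y ∈ MulAction.orbit k.proportionalSL (∞ : OnePoint F)
  · obtain ⟨⟨h, hh⟩, rfl⟩ := hy
    exact ⟨⟨h, hK.le hh⟩, rfl⟩
  have hdesc (z : OnePoint F) (hz : z ∉ MulAction.orbit k.proportionalSL (∞ : OnePoint F)) :
      ∃ t : F, t ∉ k ∧ z = (t : OnePoint F) := by
    rw [orbit_proportionalSL_infty] at hz
    induction z using OnePoint.rec with
    | infty => exact absurd ⟨∞, rfl⟩ hz
    | coe t => exact ⟨t, fun ht => hz ⟨((⟨t, ht⟩ : k) : OnePoint k), rfl⟩, rfl⟩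
  obtain ⟨x, hxk, rfl⟩ := hdesc x hx
  obtain ⟨y, hyk, rfl⟩ := hdesc y hy
  obtain ⟨a, ha, b, hb, rfl⟩ := exists_mul_add_of_notMem hcard hxk y
  obtain ⟨s, rfl⟩ := exists_sq_eq_of_mem hcard hodd ha
  have hs : s ≠ 0 := by
    rintro rfl
    simp [hb] at hyk
  have hg := hK.le (affine_mem_proportionalSL (b := b / s) hs ha (by rwa [mul_div_cancel₀ _ hs]))
  have := MulAction.mem_orbit_of_mem_orbit (⟨_, hg⟩ : K) hxK
  change mkSL s (b / s) 0 s⁻¹ (by field_simp; ring) • (x : OnePoint F) ∈ _ at this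
  rwa [mkSL_smul_coe _ hs, mul_div_cancel₀ _ hs] at this

/-- If `F` is a quadratic extension of the finite field `k` of odd order, then the matrices
proportional to matrices over `k` form a maximal subgroup of `SL₂(F)`. -/
theorem isCoatom_proportionalSL [Finite F] (hcard : Nat.card F = Nat.card k ^ 2)
    (hodd : Odd (Nat.card k)) : IsCoatom k.proportionalSL := by
  have hcard_one : 1 < Nat.card k := Finite.one_lt_card
  constructor
  · intro htop
    obtain ⟨x, hx⟩ : ∃ x : F, x ∉ k := by
      by_contra! hall
      have : Nat.card k = Nat.card F := by
        rw [(eq_top_iff.2 fun x _ => hall x : k = ⊤)]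
        exact Nat.card_congr (Equiv.Set.univ F)
      nlinarith
    obtain ⟨c, hc, hg⟩ : mkSL 1 x 0 1 (by ring) ∈ k.proportionalSL := htop ▸ Subgroup.mem_top _
    have hck : c * 1 ∈ k := hg 0 0
    have hcx : c * x ∈ k := hg 0 1
    rw [mul_one] at hck
    have := div_mem hcx hck
    rw [mul_div_cancel_left₀ _ hc] at this
    exact hx this
  · intro K hK
    by_cases hu : ∀ b : F, mkSL 1 b 0 1 (by ring) ∈ K → b ∈ k
    · exfalso
      set B := MulAction.stabilizer (SpecialLinearGroup (Fin 2) F) (∞ : OnePoint F)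
      have hB : B ⊓ k.proportionalSL = B ⊓ K := le_antisymm (inf_le_inf_left _ hK.le)
        fun g hg => ⟨hg.1, mem_proportionalSL_of_upper hK.le hu hg.2 (mem_stabilizer_infty.1 hg.1)⟩
      have hmul := Subgroup.relIndex_mul_relIndex _ _ K
        (inf_le_right : B ⊓ k.proportionalSL ≤ k.proportionalSL) hK.le
      rw [Subgroup.inf_relIndex_right, hB, Subgroup.inf_relIndex_right,
        relIndex_stabilizer_infty, relIndex_stabilizer_infty, ncard_orbit_proportionalSL_infty,
        orbit_infty_eq_univ hcard hodd hK, Set.ncard_univ,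
        card_onePoint, hcard] at hmul
      have hdvd : Nat.card k + 1 ∣ 2 := by
        have h1 : Nat.card k + 1 ∣ Nat.card k ^ 2 + 1 := ⟨_, hmul.symm⟩
        have h2 : Nat.card k + 1 ∣ Nat.card k ^ 2 - 1 := by
          simpa using (Nat.sq_sub_sq (Nat.card k) 1) ▸ Dvd.intro _ rfl
        have h3 := Nat.dvd_sub h1 h2
        have h4 : 1 ≤ Nat.card k ^ 2 := Nat.one_le_pow _ _ (by omega)
        rwa [show Nat.card k ^ 2 + 1 - (Nat.card k ^ 2 - 1) = 2 by omega] at h3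
      have := Nat.le_of_dvd two_pos hdvd
      omega
    · push Not at hu
      obtain ⟨b, hbK, hb⟩ := hu
      exact eq_top_of_unipotent_mem hcard hodd hK.le hb hbK

end MoebiusAction

end Subfield

section Embedding

/-- Two elements of `SL₂(F)` have the same image in `PSL₂(F)` iff they are proportional. -/
lemma psl_mk_eq_mk_iff {F : Type*} [Field F] {A B : SpecialLinearGroup (Fin 2) F} :
    (QuotientGroup.mk' (Subgroup.center _) A : ProjectiveSpecialLinearGroup (Fin 2) F) =
      QuotientGroup.mk' (Subgroup.center _) B ↔ ∃ t : F, B.1 = t • A.1 := by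
  rw [QuotientGroup.mk'_eq_mk']
  constructor
  · rintro ⟨z, hz, rfl⟩
    obtain ⟨r, -, hr⟩ := Matrix.SpecialLinearGroup.mem_center_iff.1 hz
    refine ⟨r, ?_⟩
    change A.1 * z.1 = r • A.1
    rw [← hr, scalar_apply, ← smul_one_eq_diagonal, Matrix.mul_smul, Matrix.mul_one]
  · rintro ⟨t, ht⟩
    have hdet := B.2
    rw [ht, det_smul, A.2, mul_one] at hdet
    refine ⟨⟨scalar (Fin 2) t, by simpa using hdet⟩,
      Matrix.SpecialLinearGroup.mem_center_iff.2 ⟨t, hdet, rfl⟩, Subtype.ext ?_⟩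
    change A.1 * scalar (Fin 2) t = B.1
    rw [ht, scalar_apply, ← smul_one_eq_diagonal, Matrix.mul_smul, Matrix.mul_one]

variable {F₀ F : Type*} [Field F₀] [Field F] (f : F₀ →+* F) (c : F₀ → F)
  (hc : ∀ u, u ≠ 0 → c u ^ 2 * f u = 1)

/-- The rescaling of the image in `GL₂(F)` of a matrix of `GL₂(F₀)` to determinant one, where `c u`
is the inverse of a square root of `u` in `F`. -/
noncomputable def glRescale (h : GL (Fin 2) F₀) : SpecialLinearGroup (Fin 2) F :=
  ⟨c h.1.det • h.1.map f, by
    rw [det_smul, Fintype.card_fin, ← RingHom.mapMatrix_apply, ← RingHom.map_det]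
    exact hc _ h.det_ne_zero⟩

/-- The homomorphism `GL₂(F₀) → PSL₂(F)` given by rescaling matrices to determinant one. -/
noncomputable def glToPSL : GL (Fin 2) F₀ →* ProjectiveSpecialLinearGroup (Fin 2) F :=
  MonoidHom.mk' (fun h => QuotientGroup.mk' (Subgroup.center _) (glRescale f c hc h))
    (fun g h => by
      rw [← map_mul, psl_mk_eq_mk_iff]
      have hgh : c (g * h).1.det ≠ 0 := fun h0 => by
        have := hc _ (g * h).det_ne_zero
        rw [h0, zero_pow two_ne_zero, zero_mul] at this
        exact zero_ne_one this
      refine ⟨c g.1.det * c h.1.det / c (g * h).1.det, ?_⟩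
      change (c g.1.det • g.1.map f) * (c h.1.det • h.1.map f) =
        _ • (c (g * h).1.det • (g.1 * h.1).map f)
      rw [smul_smul, div_mul_cancel₀ _ hgh, Matrix.map_mul, smul_mul_smul_comm])

lemma ker_glToPSL : (glToPSL f c hc).ker = Subgroup.center (GL (Fin 2) F₀) := by
  ext h
  rw [MonoidHom.mem_ker, GeneralLinearGroup.mem_center_iff_val_mem_range_scalar]
  change QuotientGroup.mk' _ (glRescale f c hc h) = 1 ↔ _
  rw [← map_one (QuotientGroup.mk' _), eq_comm, psl_mk_eq_mk_iff]
  have hc0 : c h.1.det ≠ 0 := fun h0 => by simpa [h0] using hc _ h.det_ne_zero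
  change (∃ t : F, c h.1.det • h.1.map f = t • (1 : Matrix (Fin 2) (Fin 2) F)) ↔ _
  constructor
  · rintro ⟨t, ht⟩
    have hij (i j : Fin 2) := congrFun (congrFun ht i) j
    have h01 := hij 0 1
    have h10 := hij 1 0
    have h00 := hij 0 0
    have h11 := hij 1 1
    simp [hc0] at h01 h10 h00 h11
    refine ⟨h.1 0 0, ?_⟩
    have : h.1 0 0 = h.1 1 1 := f.injective (mul_left_cancel₀ hc0 (h00.trans h11.symm))
    ext i j
    fin_cases i <;> fin_cases j <;> simp [h01, h10, this]
  · rintro ⟨a, ha⟩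
    refine ⟨c h.1.det * f a, ?_⟩
    rw [← ha]
    ext i j
    fin_cases i <;> fin_cases j <;> simp

lemma comap_range_glToPSL :
    (glToPSL f c hc).range.comap (QuotientGroup.mk' (Subgroup.center _)) =
      f.fieldRange.proportionalSL := by
  ext g
  rw [Subgroup.mem_comap, MonoidHom.mem_range]
  change (∃ h, QuotientGroup.mk' _ (glRescale f c hc h) = _) ↔
    ∃ t : F, t ≠ 0 ∧ ∀ i j, t * g.1 i j ∈ f.fieldRange
  simp only [psl_mk_eq_mk_iff]
  constructor
  · rintro ⟨h, t, ht⟩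
    have ht : g.1 = t • c h.1.det • h.1.map f := ht
    have htc : t * c h.1.det ≠ 0 := fun h0 => by
      have := g.2
      rw [ht, smul_smul, h0, zero_smul, det_zero] at this
      exact zero_ne_one this
    refine ⟨(t * c h.1.det)⁻¹, inv_ne_zero htc, fun i j => ⟨h.1 i j, ?_⟩⟩
    rw [ht, smul_smul, Matrix.smul_apply, smul_eq_mul, inv_mul_cancel_left₀ htc, map_apply]
  · rintro ⟨t, ht, hg⟩
    choose M hM using hg
    have hmap : (Matrix.of M).map f = t • g.1 := by
      ext i j
      exact hM i j
    have hdet : (Matrix.of M).det ≠ 0 := fun h0 => by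
      have := f.map_det (Matrix.of M)
      rw [h0, map_zero, RingHom.mapMatrix_apply, hmap, det_smul, g.2, mul_one] at this
      exact pow_ne_zero _ ht this.symm
    have hc0 : c (Matrix.of M).det ≠ 0 := fun h0 => by simpa [h0] using hc _ hdet
    refine ⟨GeneralLinearGroup.mkOfDetNeZero _ hdet, (c (Matrix.of M).det * t)⁻¹, ?_⟩
    change g.1 = _ • c (Matrix.of M).det • (Matrix.of M).map f
    rw [hmap, smul_smul, smul_smul, inv_mul_eq_div, div_mul_eq_mul_div,
      div_self (mul_ne_zero hc0 ht), one_smul]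

end Embedding

section Card

variable (F : Type*) [Field F] [Finite F]

lemma card_GL_two : Nat.card (GL (Fin 2) F) =
    Nat.card Fˣ * (Nat.card F * (Nat.card F ^ 2 - 1)) := by
  have := Fintype.ofFinite F
  rw [Matrix.card_GL_field, Fin.prod_univ_two, Nat.card_units, ← Nat.card_eq_fintype_card]
  simp only [Fin.val_zero, Fin.val_one, pow_zero, pow_one]
  rw [sq, ← Nat.mul_sub_one]
  ring

lemma card_SL_two : Nat.card (SpecialLinearGroup (Fin 2) F) =
    Nat.card F * (Nat.card F ^ 2 - 1) := by
  have hker : Nat.card (GeneralLinearGroup.det : GL (Fin 2) F →* Fˣ).ker =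
      Nat.card (SpecialLinearGroup (Fin 2) F) := by
    refine (Nat.card_congr (Equiv.ofBijective
      (fun g : SpecialLinearGroup (Fin 2) F =>
        (⟨SpecialLinearGroup.toGL g, Units.ext g.2⟩ :
          (GeneralLinearGroup.det : GL (Fin 2) F →* Fˣ).ker)) ⟨fun a b h => ?_, fun g => ?_⟩)).symm
    · exact Subtype.ext (congrArg (fun x => x.1.1) h)
    · exact ⟨⟨g.1.1, congrArg Units.val g.2⟩, Subtype.ext (Units.ext rfl)⟩
  have h := (GeneralLinearGroup.det : GL (Fin 2) F →* Fˣ).ker.card_mul_index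
  rw [hker, Subgroup.index_ker, MonoidHom.range_eq_top.2 GeneralLinearGroup.det_surjective,
    Subgroup.card_top, card_GL_two, mul_comm] at h
  exact Nat.eq_of_mul_eq_mul_left Nat.card_pos h

lemma card_PSL_two_mul_two (hF : ringChar F ≠ 2) :
    Nat.card (ProjectiveSpecialLinearGroup (Fin 2) F) * 2 =
      Nat.card F * (Nat.card F ^ 2 - 1) := by
  have hcenter : Nat.card (Subgroup.center (SpecialLinearGroup (Fin 2) F)) = 2 := by
    rw [Nat.card_congr (SpecialLinearGroup.center_equiv_rootsOfUnity' (0 : Fin 2)).toEquiv,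
      Fintype.card_fin]
    exact (IsPrimitiveRoot.neg_one (ringChar F) hF).card_rootsOfUnity
  rw [← card_SL_two, Subgroup.card_eq_card_quotient_mul_card_subgroup
    (Subgroup.center (SpecialLinearGroup (Fin 2) F)), hcenter]

lemma card_PGL_two : Nat.card (ProjectiveGeneralLinearGroup (Fin 2) F) =
    Nat.card F * (Nat.card F ^ 2 - 1) := by
  have hcenter : Nat.card (Subgroup.center (GL (Fin 2) F)) = Nat.card Fˣ := by
    rw [GeneralLinearGroup.center_eq_range_scalar]
    refine Nat.card_range_of_injective (f := GeneralLinearGroup.scalar (Fin 2)) fun a b h => ?_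
    exact Units.ext (scalar_inj.1 (congrArg Units.val h))
  have h := (Subgroup.center (GL (Fin 2) F)).card_eq_card_quotient_mul_card_subgroup
  rw [card_GL_two, hcenter, mul_comm] at h
  exact (Nat.eq_of_mul_eq_mul_right Nat.card_pos h).symm

end Card

/-- A finite field embeds into every field whose order is the square of its order. -/
lemma nonempty_ringHom_of_card_eq_sq {F₀ F : Type*} [Field F₀] [Fintype F₀] [Field F] [Fintype F]
    (h : Fintype.card F = Fintype.card F₀ ^ 2) : Nonempty (F₀ →+* F) := by
  obtain ⟨p, _⟩ := CharP.exists F₀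
  obtain ⟨n, hp, hn⟩ := FiniteField.card F₀ p
  have : Fact p.Prime := ⟨hp⟩
  have : CharP F p := charP_of_card_eq_prime_pow (f := n * 2) (by rw [h, hn, pow_mul])
  let := ZMod.algebra F₀ p
  let := ZMod.algebra F p
  have hdvd : Module.finrank (ZMod p) F₀ ∣ Module.finrank (ZMod p) F := by
    refine Dvd.intro 2 (Nat.pow_right_injective hp.two_le ?_)
    simp only [pow_mul, FiniteField.pow_finrank_eq_card, h]
  obtain ⟨f⟩ := FiniteField.nonempty_algHom_of_finrank_dvd hdvd
  exact ⟨f.toRingHom⟩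

/-- for `q₀` an odd prime power, `F₀` a field with `q₀` elements and `F` a
field with `q₀²` elements, `PSL₂(F)` has a maximal subgroup of odd index isomorphic to
`PGL₂(F₀)`. -/
theorem psl2_maximal_odd_index_pgl2 (q₀ : ℕ) (hq_odd : Odd q₀) (hq_pp : IsPrimePow q₀)
    (F₀ : Type) [Field F₀] [Fintype F₀] (hF₀ : Fintype.card F₀ = q₀)
    (F : Type) [Field F] [Fintype F] (hF : Fintype.card F = q₀ ^ 2) :
    ∃ H : Subgroup (Matrix.ProjectiveSpecialLinearGroup (Fin 2) F),
      IsCoatom H ∧ Odd H.index ∧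
        Nonempty (H ≃* ProjectiveGeneralLinearGroup (Fin 2) F₀) := by
  obtain ⟨f⟩ := nonempty_ringHom_of_card_eq_sq (hF₀ ▸ hF)
  have hk : Nat.card f.fieldRange = q₀ := by
    rw [← hF₀, ← Nat.card_eq_fintype_card]
    exact Nat.card_range_of_injective f.injective
  have hcard : Nat.card F = Nat.card f.fieldRange ^ 2 := by
    rw [hk, Nat.card_eq_fintype_card, hF]
  have hodd : Odd (Nat.card f.fieldRange) := hk ▸ hq_odd
  have hroot (u : F₀) : ∃ c : F, u ≠ 0 → c ^ 2 * f u = 1 := by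
    obtain ⟨s, hs⟩ := Subfield.exists_sq_eq_of_mem hcard hodd (f.mem_fieldRange_self u)
    refine ⟨s⁻¹, fun hu => ?_⟩
    rw [inv_pow, hs, inv_mul_cancel₀ ((map_ne_zero f).2 hu)]
  choose c hc using hroot
  let e : (glToPSL f c hc).range ≃* ProjectiveGeneralLinearGroup (Fin 2) F₀ :=
    (QuotientGroup.quotientKerEquivRange _).symm.trans
      (QuotientGroup.quotientMulEquivOfEq (ker_glToPSL f c hc))
  refine ⟨(glToPSL f c hc).range, ?_, ?_, ⟨e⟩⟩
  · have hco := Subfield.isCoatom_proportionalSL hcard hodd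
    rw [← comap_range_glToPSL f c hc] at hco
    refine ⟨fun htop => hco.1 (by rw [htop, Subgroup.comap_top]), fun K hK => ?_⟩
    have hsurj := QuotientGroup.mk'_surjective (Subgroup.center (SpecialLinearGroup (Fin 2) F))
    refine Subgroup.comap_injective hsurj ?_
    rw [Subgroup.comap_top]
    exact hco.2 _ ((Subgroup.comap_lt_comap_of_surjective hsurj).2 hK)
  · have h2 : ringChar F ≠ 2 := by
      apply ringChar_ne_two_of_odd_card
      rw [Nat.card_eq_fintype_card, hF]
      exact hq_odd.pow
    have hmul := (glToPSL f c hc).range.card_mul_index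
    have hPSL := card_PSL_two_mul_two F h2
    rw [← hmul, Nat.card_congr e.toEquiv, card_PGL_two, Nat.card_eq_fintype_card, hF₀,
      Nat.card_eq_fintype_card, hF] at hPSL
    have hq : 1 < q₀ := hF₀ ▸ Fintype.one_lt_card
    obtain ⟨N, hN⟩ : ∃ N, q₀ ^ 2 = N + 1 :=
      Nat.exists_eq_succ_of_ne_zero (pow_ne_zero _ (by omega))
    have hNpos : 0 < N := by nlinarith
    have hfour : (q₀ ^ 2) ^ 2 - 1 = N * (q₀ ^ 2 + 1) := by
      rw [hN, show (N + 1) ^ 2 = N * (N + 1 + 1) + 1 by ring, Nat.add_sub_cancel]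
    rw [hfour, show q₀ ^ 2 - 1 = N by omega] at hPSL
    have hindex : (glToPSL f c hc).range.index * 2 = q₀ * (q₀ ^ 2 + 1) := by
      refine Nat.eq_of_mul_eq_mul_left (Nat.mul_pos (by omega : 0 < q₀) hNpos) ?_
      linear_combination hPSL
    obtain ⟨m, rfl⟩ := hq_odd
    have : (glToPSL f c hc).range.index = (2 * m + 1) * (2 * (m ^ 2 + m) + 1) := by
      refine Nat.eq_of_mul_eq_mul_right two_pos ?_
      linear_combination hindex
    rw [this]
    exact (odd_two_mul_add_one m).mul (odd_two_mul_add_one _)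
end

section
/- Let q be an odd prime power, F a finite field with q elements, n ≥ 2, and W a submodule of Fⁿ (i.e., W : Submodule F (Fin n → F)) with Module.finrank F W = m. Let H be the stabilizer of W in SL(n,F), i.e., the subgroup {A ∈ SL(n,F) : Submodule.map (Matrix.toLin' A) W = W}. Then the index of H in SL(n,F) is odd if and only if every binary digit of m is at most the corresponding binary digit of n, i.e., ∀ i, Nat.testBit m i = true → Nat.testBit n i = true. -/
/-- The stabilizer in `SL(n, F)` of a submodule `W` of `Fⁿ`, consisting of those special
linear matrices `A` with `Submodule.map (Matrix.toLin' A) W = W`. -/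
def slSubspaceStabilizer (F : Type*) [Field F] (n : ℕ) (W : Submodule F (Fin n → F)) :
    Subgroup (Matrix.SpecialLinearGroup (Fin n) F) where
  carrier := {A | Submodule.map (Matrix.toLin' (A : Matrix (Fin n) (Fin n) F)) W = W}
  one_mem' := by
    simp [Matrix.SpecialLinearGroup.coe_one, Matrix.toLin'_one]
  mul_mem' := by
    intro A B hA hB
    simp only [Set.mem_setOf_eq] at *
    rw [Matrix.SpecialLinearGroup.coe_mul, Matrix.toLin'_mul, Submodule.map_comp, hB, hA]
  inv_mem' := by
    intro A hA
    simp only [Set.mem_setOf_eq] at *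
    have h1 : ((A⁻¹ : Matrix.SpecialLinearGroup (Fin n) F) : Matrix (Fin n) (Fin n) F) *
        (A : Matrix (Fin n) (Fin n) F) = 1 := by
      rw [← Matrix.SpecialLinearGroup.coe_mul, inv_mul_cancel,
        Matrix.SpecialLinearGroup.coe_one]
    conv_lhs => rw [← hA]
    rw [← Submodule.map_comp, ← Matrix.toLin'_mul, h1, Matrix.toLin'_one, Submodule.map_id]

theorem Nat.odd_choose_iff_testBit (n m : ℕ) :
    Odd (n.choose m) ↔ ∀ i, m.testBit i = true → n.testBit i = true := by
  induction m using Nat.strong_induction_on generalizing n with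
  | _ m ih =>
    rcases Nat.eq_zero_or_pos m with rfl | hm
    · simp
    · have lucas := Choose.choose_modEq_choose_mod_mul_choose_div_nat (n := n) (k := m) (p := 2)
      have split_zero : (∀ i, m.testBit i = true → n.testBit i = true) ↔
          (m % 2 = 1 → n % 2 = 1) ∧
            ∀ i, (m / 2).testBit i = true → (n / 2).testBit i = true := by
        constructor
        · exact fun h ↦ ⟨by simpa using h 0, fun i ↦ by simpa [Nat.testBit_add_one] using h (i + 1)⟩
        · rintro ⟨h0, hs⟩ (_ | i)
          · simpa using h0
          · simpa [Nat.testBit_add_one] using hs i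
      have odd_mod : Odd ((n % 2).choose (m % 2)) ↔ (m % 2 = 1 → n % 2 = 1) := by
        rcases Nat.mod_two_eq_zero_or_one n with h | h <;>
          rcases Nat.mod_two_eq_zero_or_one m with h' | h' <;> simp [h, h']
      rw [split_zero, ← ih (m / 2) (by omega) (n / 2), ← odd_mod, ← Nat.odd_mul, Nat.odd_iff,
        lucas, ← Nat.odd_iff]

section Subspaces

variable {F V : Type*} [Field F] [AddCommGroup V] [Module F V]

/-- A representation of `G` on `V` makes `G` act on the `m`-dimensional subspaces of `V`. -/
abbrev subspaceMulAction {G : Type*} [Group G] (ρ : G →* (V ≃ₗ[F] V)) (m : ℕ) :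
    MulAction G {U : Submodule F V // Module.finrank F U = m} where
  smul g U := ⟨U.1.map (ρ g : V →ₗ[F] V), (LinearEquiv.finrank_map_eq (ρ g) U.1).trans U.2⟩
  one_smul U := Subtype.ext (by
    change U.1.map (ρ 1 : V →ₗ[F] V) = U.1
    rw [map_one]
    exact Submodule.map_id _)
  mul_smul g h U := Subtype.ext (by
    change U.1.map (ρ (g * h) : V →ₗ[F] V) =
      (U.1.map (ρ h : V →ₗ[F] V)).map (ρ g : V →ₗ[F] V)
    rw [map_mul, ← Submodule.map_comp]
    rfl)

/-- Any nonzero scalar is the determinant of an automorphism of `V` preserving a given nonzero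
subspace. -/
theorem Submodule.exists_linearEquiv_det_eq_map_eq [FiniteDimensional F V] {W : Submodule F V}
    (hW : W ≠ ⊥) (a : Fˣ) :
    ∃ h : V ≃ₗ[F] V, LinearEquiv.det h = a ∧ W.map (h : V →ₗ[F] V) = W := by
  obtain ⟨v, hvW, hv⟩ := W.ne_bot_iff.mp hW
  obtain ⟨f, hf⟩ := Module.exists_dual_forall_apply_eq_one (K := F)
    (LinearIndepOn.singleton (R := F) (v := id) (i := v) hv)
  have hfv : f v = 1 := hf v rfl
  refine ⟨LinearEquiv.dilatransvection (f := f) (v := (a.val - 1) • v) (by simp [hfv]), ?_, ?_⟩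
  · simp [← Units.val_inj, LinearEquiv.coe_det, LinearMap.transvection.det, hfv]
  · refine Submodule.eq_of_le_of_finrank_eq ?_ (LinearEquiv.finrank_map_eq _ W)
    rintro _ ⟨x, hx, rfl⟩
    rw [LinearEquiv.dilatransvection.coe_toLinearMap, LinearMap.transvection.apply]
    exact W.add_mem hx (W.smul_mem _ (W.smul_mem _ hvW))

/-- Two subspaces of the same dimension are related by an automorphism of determinant one. -/
theorem Submodule.exists_linearEquiv_det_eq_one_map_eq [FiniteDimensional F V]
    {W U : Submodule F V} (h : Module.finrank F W = Module.finrank F U) :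
    ∃ g : V ≃ₗ[F] V, LinearEquiv.det g = 1 ∧ W.map (g : V →ₗ[F] V) = U := by
  by_cases hW : W = ⊥
  · subst hW
    have hU : U = ⊥ := Submodule.finrank_eq_zero.mp (by rw [← h, finrank_bot])
    exact ⟨1, map_one _, by simp [hU]⟩
  · obtain ⟨g, hg⟩ := Submodule.exists_linearEquiv_restrict_eq (LinearEquiv.ofFinrankEq W U h)
    have hgW : W.map (g : V →ₗ[F] V) = U := by
      refine Submodule.eq_of_le_of_finrank_eq ?_ ((LinearEquiv.finrank_map_eq g W).trans h)
      rintro _ ⟨x, hx, rfl⟩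
      exact (hg ⟨x, hx⟩) ▸ Subtype.coe_prop _
    obtain ⟨k, hk, hkW⟩ := Submodule.exists_linearEquiv_det_eq_map_eq hW (LinearEquiv.det g)⁻¹
    refine ⟨g * k, by rw [map_mul, hk, mul_inv_cancel], ?_⟩
    calc W.map ((g * k : V ≃ₗ[F] V) : V →ₗ[F] V)
        = (W.map (k : V →ₗ[F] V)).map (g : V →ₗ[F] V) := Submodule.map_comp _ _ _
      _ = U := by rw [hkW, hgW]

end Subspaces

/-- The index of the stabilizer of `W` in `SL(n, F)` is the number of subspaces of the same
dimension as `W`. -/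
theorem slSubspaceStabilizer_index {F : Type*} [Field F] {n : ℕ} (W : Submodule F (Fin n → F)) :
    (slSubspaceStabilizer F n W).index =
      Nat.card {U : Submodule F (Fin n → F) // Module.finrank F U = Module.finrank F W} := by
  let _ := subspaceMulAction (Matrix.SpecialLinearGroup.toLin' (n := Fin n) (R := F))
    (Module.finrank F W)
  have stab : slSubspaceStabilizer F n W = MulAction.stabilizer
      (Matrix.SpecialLinearGroup (Fin n) F)
      (⟨W, rfl⟩ : {U : Submodule F (Fin n → F) // Module.finrank F U = Module.finrank F W}) := by
    ext A
    rw [MulAction.mem_stabilizer_iff, Subtype.ext_iff]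
    rfl
  have trans : MulAction.IsPretransitive (Matrix.SpecialLinearGroup (Fin n) F)
      {U : Submodule F (Fin n → F) // Module.finrank F U = Module.finrank F W} := by
    refine ⟨fun U U' ↦ ?_⟩
    obtain ⟨g, hg, hgU⟩ := Submodule.exists_linearEquiv_det_eq_one_map_eq (U.2.trans U'.2.symm)
    refine ⟨⟨LinearMap.toMatrix' (g : (Fin n → F) →ₗ[F] (Fin n → F)), ?_⟩, Subtype.ext ?_⟩
    · rw [LinearMap.det_toMatrix', ← LinearEquiv.coe_det, hg, Units.val_one]
    · change U.1.map (Matrix.toLin' (LinearMap.toMatrix' _)) = U'.1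
      rw [Matrix.toLin'_toMatrix', hgU]
  rw [stab, MulAction.index_stabilizer_of_transitive]

section Signs

variable {F : Type*} [Field F] {n : ℕ}

/-- The representation of the group of sign vectors on `Fⁿ` by diagonal matrices. -/
def signRepresentation (F : Type*) [Field F] (n : ℕ) :
    (Fin n → ℤˣ) →* ((Fin n → F) ≃ₗ[F] (Fin n → F)) :=
  have : SMulCommClass (Fin n → ℤˣ) F (Fin n → F) :=
    ⟨fun ε c v ↦ funext fun i ↦ smul_comm (ε i) c (v i)⟩
  DistribMulAction.toModuleAut F (Fin n → F)

theorem signRepresentation_apply (ε : Fin n → ℤˣ) (v : Fin n → F) (i : Fin n) :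
    signRepresentation F n ε v i = ε i • v i :=
  rfl

/-- In odd characteristic, a subspace of `Fⁿ` stable under all sign changes of coordinates is a
coordinate subspace. -/
theorem eq_spanSubset_of_sign_stable (h2 : (2 : F) ≠ 0) {U : Submodule F (Fin n → F)}
    (hU : ∀ ε, ∀ v ∈ U, signRepresentation F n ε v ∈ U) :
    U = Pi.spanSubset F {i | Pi.single i 1 ∈ U} := by
  classical
  refine le_antisymm (fun v hv ↦ Pi.mem_spanSubset_iff.mpr fun i hi ↦ ?_) ?_
  · by_contra hvi
    refine hi (show Pi.single i 1 ∈ U from ?_)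
    have hdiff := U.smul_mem (2 * v i)⁻¹ (U.sub_mem hv (hU (Pi.mulSingle i (-1)) v hv))
    convert hdiff using 1
    ext j
    by_cases hj : j = i
    · subst hj
      simp [signRepresentation_apply]
      field_simp
      ring
    · simp [signRepresentation_apply, hj]
  · refine Submodule.span_le.mpr ?_
    rintro _ ⟨i, hi, rfl⟩
    simpa using hi

theorem map_signRepresentation_spanSubset (s : Set (Fin n)) (ε : Fin n → ℤˣ) :
    (Pi.spanSubset F s).map (signRepresentation F n ε : (Fin n → F) →ₗ[F] (Fin n → F)) =
      Pi.spanSubset F s := by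
  refine Submodule.eq_of_le_of_finrank_eq ?_ (LinearEquiv.finrank_map_eq _ _)
  rintro _ ⟨v, hv, rfl⟩
  refine Pi.mem_spanSubset_iff.mpr fun i hi ↦ ?_
  change ε i • v i = 0
  rw [Pi.mem_spanSubset_iff.mp hv i hi, smul_zero]

theorem single_mem_spanSubset_iff {s : Set (Fin n)} {i : Fin n} :
    Pi.single i (1 : F) ∈ Pi.spanSubset F s ↔ i ∈ s := by
  rw [Pi.mem_spanSubset_iff]
  refine ⟨fun h ↦ by_contra fun hi ↦ one_ne_zero (α := F) (by simpa using h i hi), fun hi j hj ↦ ?_⟩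
  exact Pi.single_eq_of_ne (by rintro rfl; exact hj hi) _

/-- Over a finite field of odd characteristic, the number of `m`-dimensional subspaces of `Fⁿ`
has the parity of `n.choose m`. -/
theorem card_subspaces_modEq_choose [Finite F] (h2 : (2 : F) ≠ 0) (m : ℕ) :
    Nat.card {U : Submodule F (Fin n → F) // Module.finrank F U = m} ≡ n.choose m [MOD 2] := by
  let _ := subspaceMulAction (signRepresentation F n) m
  have pgroup : IsPGroup 2 (Fin n → ℤˣ) := fun ε ↦ ⟨1, funext fun i ↦ Int.units_sq (ε i)⟩
  have : Finite (Submodule F (Fin n → F)) := Finite.of_injective _ SetLike.coe_injective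
  let coordinate : Finset.powersetCard m (Finset.univ : Finset (Fin n)) →
      MulAction.fixedPoints (Fin n → ℤˣ)
        {U : Submodule F (Fin n → F) // Module.finrank F U = m} := fun s ↦
    ⟨⟨Pi.spanSubset F (s.1 : Set (Fin n)), by
      rw [Pi.dim_spanSubset, Set.ncard_coe_finset, (Finset.mem_powersetCard.mp s.2).2]⟩,
      fun ε ↦ Subtype.ext (map_signRepresentation_spanSubset _ ε)⟩
  have bij : Function.Bijective coordinate := by
    constructor
    · intro s t hst
      have hspan : Pi.spanSubset F (s.1 : Set (Fin n)) = Pi.spanSubset F (t.1 : Set (Fin n)) :=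
        congrArg (fun U ↦ U.1.1) hst
      refine Subtype.ext (Finset.ext fun i ↦ ?_)
      rw [← Finset.mem_coe, ← single_mem_spanSubset_iff (F := F), hspan,
        single_mem_spanSubset_iff, Finset.mem_coe]
    · rintro ⟨⟨U, hUm⟩, hfix⟩
      have hU := eq_spanSubset_of_sign_stable h2 (U := U) fun ε v hv ↦ by
        have hmap : U.map (signRepresentation F n ε : (Fin n → F) →ₗ[F] (Fin n → F)) = U :=
          congrArg Subtype.val (hfix ε)
        exact hmap.le ⟨v, hv, rfl⟩
      classical
      refine ⟨⟨Set.toFinset {i | Pi.single i 1 ∈ U}, ?_⟩, ?_⟩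
      · refine Finset.mem_powersetCard.mpr ⟨Finset.subset_univ _, ?_⟩
        rw [← Set.ncard_eq_toFinset_card', ← Pi.dim_spanSubset (R := F), ← hU, hUm]
      · refine Subtype.ext (Subtype.ext ?_)
        change Pi.spanSubset F _ = U
        rw [Set.coe_toFinset, ← hU]
  refine (pgroup.card_modEq_card_fixedPoints _).trans ?_
  rw [← Nat.card_eq_of_bijective coordinate bij, Nat.card_eq_fintype_card, Fintype.card_coe, Finset.card_powersetCard,
    Finset.card_fin]

end Signs

/-- the stabilizer in `SL(n, F)` (`q` odd, `|F| = q`, `n ≥ 2`) of an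
`m`-dimensional subspace of `Fⁿ` has odd index iff every binary digit of `m` is at most
the corresponding binary digit of `n`. -/
theorem sl_subspace_stabilizer_odd_index_iff (q : ℕ) (hq_odd : Odd q) (hq_pp : IsPrimePow q)
    (F : Type) [Field F] [Fintype F] (hF : Fintype.card F = q) (n : ℕ) (hn : 2 ≤ n)
    (W : Submodule F (Fin n → F)) (m : ℕ) (hm : Module.finrank F W = m) :
    Odd (slSubspaceStabilizer F n W).index ↔
      ∀ i, Nat.testBit m i = true → Nat.testBit n i = true := by
  have h2 : (2 : F) ≠ 0 := by
    refine Ring.two_ne_zero fun hchar ↦ ?_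
    have := FiniteField.even_card_of_char_two hchar
    rw [Nat.odd_iff] at hq_odd
    omega
  rw [slSubspaceStabilizer_index, hm, ← Nat.odd_choose_iff_testBit, Nat.odd_iff,
    card_subspaces_modEq_choose h2 m, ← Nat.odd_iff]
end
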